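/- arXiv:1411.3842 — 2 statements merged into one kernel-verified Lean document; each statement's English description precedes it below -/
import Mathlib

section
/- For every real number c < 8 there exists ε₀ > 0 with the following property. Let ε ∈ (0, ε₀) and let K ⊂ ℝ² be an o-symmetric convex body whose Banach–Mazur distance from ellipses is at least 1 + ε, that is, there are no invertible linear map T : ℝ² → ℝ² and λ ∈ [1, 1+ε) with T(B²) ⊆ K ⊆ λ·T(B²). Then V(K)·V(K*) ≤ π²·(1 − c·ε³). -/
/-!
Inscribe a fine `o`-symmetric polygon with vertices `x i` in `K`, the unit ball of a norm, and let
`S` and `Q` be the areas of the polygon and of its polar. In the parameter `φ` given by the area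
swept out along the polygon, normalized to increase by `π` over half the polygon, every linear
functional of the vertices solves a discrete Hill equation `g'' = -q g` whose potential `q` has the
sum `S Q / π`. The quadratic forms of this equation at the test functions `sin φ` and `cos φ` add
up to at most `π - ∑ q`, because `sin² + cos² = 1` and a chord is shorter than its arc. Each form is
nonnegative by Jacobi's factorization relative to the solution `g` that agrees with the test
function on the edge where the latter changes sign; this is the Blaschke–Santaló inequality
`S Q ≤ π²`.

If `S Q ≥ π² - O(δ²)`, both forms are `O(δ²)`. They dominate the squared increments of
`log (g / sin φ)`, respectively `log (g / cos φ)`, so that both test functions are within `O(δ)` of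
linear functionals of the vertices. These two functionals make up a linear map which takes the
vertices to within `O(δ)` of the points of the unit circle, and hence `K` lies between an ellipse
and its dilate by `1 + O(δ)`. A body at distance at least `1 + ε` from the ellipses thus has a
deficit of order at least `ε²`, which exceeds any multiple of `ε³` for small `ε`.
-/

open MeasureTheory Real
open scoped Pointwise RealInnerProductSpace ENNReal

noncomputable section

abbrev E2 := EuclideanSpace ℝ (Fin 2)

/-- The polar body `K* = {y : ⟪x,y⟫ ≤ 1 for all x ∈ K}`. -/
def polarBody (K : Set E2) : Set E2 := {y | ∀ x ∈ K, ⟪x, y⟫ ≤ 1}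

/-! ### Discrete Hill equations -/

/-- The edge term in Jacobi's completion of the square for a discrete quadratic form: `a`, `b` are
the values of a test function at the two ends of an edge and `s`, `t` those of a solution of the
Hill equation. A zero of the solution shared with the test function contributes `0 ^ 2 / 0 = 0`. -/
def jacobiDefect (a b s t : ℝ) : ℝ := (b - a) ^ 2 - (b ^ 2 / t - a ^ 2 / s) * (t - s)

lemma jacobiDefect_eq_mul_sq {a b s t : ℝ} (hs : s ≠ 0) (ht : t ≠ 0) :
    jacobiDefect a b s t = s * t * (b / t - a / s) ^ 2 := by
  unfold jacobiDefect
  field_simp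
  ring

lemma jacobiDefect_self (a b : ℝ) : jacobiDefect a b a b = 0 := by
  simp only [jacobiDefect, sq, mul_self_div_self, sub_self]

lemma jacobiDefect_nonneg {a b s t : ℝ} (hs : 0 ≤ s) (ht : 0 ≤ t) (hsa : s = 0 → a = 0)
    (htb : t = 0 → b = 0) : 0 ≤ jacobiDefect a b s t := by
  rcases hs.eq_or_lt' with hs0 | hs
  · rcases ht.eq_or_lt' with ht0 | ht
    · simp [jacobiDefect, hs0, ht0, hsa hs0, htb ht0]
    · simp [jacobiDefect, hs0, hsa hs0, ht.ne']
  rcases ht.eq_or_lt' with ht0 | ht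
  · simp [jacobiDefect, ht0, htb ht0, hs.ne']
  · rw [jacobiDefect_eq_mul_sq hs.ne' ht.ne']
    positivity

lemma one_add_sq_div_two_le_cosh (x : ℝ) : 1 + x ^ 2 / 2 ≤ cosh x := by
  have half_sq_le : (x / 2) ^ 2 ≤ sinh (x / 2) ^ 2 := by
    rw [sq_le_sq, abs_sinh]
    exact self_le_sinh_iff.2 (abs_nonneg _)
  have double : cosh x = cosh (x / 2) ^ 2 + sinh (x / 2) ^ 2 := by
    rw [← cosh_two_mul, mul_div_cancel₀ x two_ne_zero]
  linarith [cosh_sq (x / 2)]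

lemma mul_sq_log_sub_log_le_jacobiDefect {a b s t : ℝ} (ha : 0 < a) (hb : 0 < b) (hs : 0 < s)
    (ht : 0 < t) : a * b * (log (t / b) - log (s / a)) ^ 2 ≤ jacobiDefect a b s t := by
  set r := log (t / b) - log (s / a) with hr
  have exp_r : exp r = t * a / (b * s) := by
    rw [hr, exp_sub, exp_log (by positivity), exp_log (by positivity)]
    field_simp
  have defect_eq : jacobiDefect a b s t = a * b * (2 * cosh r - 2) := by
    rw [jacobiDefect, cosh_eq, exp_neg, exp_r]
    field_simp
    ring
  rw [defect_eq]
  gcongr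
  linarith [one_add_sq_div_two_le_cosh r]

lemma sum_range_add_eq_of_periodic {M : Type*} [AddCommMonoid M] {F : ℕ → M} {n : ℕ}
    (hF : Function.Periodic F n) (m : ℕ) :
    ∑ i ∈ Finset.range n, F (m + i) = ∑ i ∈ Finset.range n, F i := by
  induction m with
  | zero => simp only [zero_add]
  | succ m ih =>
    rw [← ih]
    cases n with
    | zero => rfl
    | succ n =>
      rw [Finset.sum_range_succ, Finset.sum_range_succ' (fun i => F (m + i)), add_zero, ← hF m]
      simp only [add_right_comm m, add_assoc]

/-- The discrete Hill equation `g'' = -q g` on the grid `φ`, with the second difference taken over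
the (unequal) steps of the grid. -/
def IsHillSolution (φ q g : ℕ → ℝ) : Prop :=
  ∀ i, (g (i + 2) - g (i + 1)) / (φ (i + 2) - φ (i + 1)) - (g (i + 1) - g i) / (φ (i + 1) - φ i)
    = -q i * g (i + 1)

lemma IsHillSolution.shift_sub {φ q g : ℕ → ℝ} (h : IsHillSolution φ q g) (m : ℕ) (α : ℝ) :
    IsHillSolution (fun i => φ (m + i) - α) (fun i => q (m + i)) (fun i => g (m + i)) := by
  intro i
  simpa only [sub_sub_sub_cancel_right, add_assoc] using h (m + i)

/-- The energy `∫ f' ^ 2 - q f ^ 2` over one period of the grid `φ`, whose Euler–Lagrange equation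
is `IsHillSolution φ q`. -/
def hillEnergy (n : ℕ) (φ q f : ℕ → ℝ) : ℝ :=
  ∑ i ∈ Finset.range n, ((f (i + 1) - f i) ^ 2 / (φ (i + 1) - φ i) - q i * f (i + 1) ^ 2)

/-- An increasing sequence of angles in which `n` steps make half a turn. -/
structure IsHalfTurnGrid (n : ℕ) (φ : ℕ → ℝ) : Prop where
  strictMono : StrictMono φ
  apply_add : ∀ i, φ (i + n) = φ i + π

namespace IsHalfTurnGrid

variable {n : ℕ} {φ : ℕ → ℝ}

lemma shift_sub (hφ : IsHalfTurnGrid n φ) (m : ℕ) (α : ℝ) :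
    IsHalfTurnGrid n (fun i => φ (m + i) - α) where
  strictMono i j hij := sub_lt_sub_right (hφ.strictMono (Nat.add_lt_add_left hij m)) α
  apply_add i := by rw [← add_assoc, hφ.apply_add, add_sub_right_comm]

lemma period_pos (hφ : IsHalfTurnGrid n φ) : 0 < n := by
  rw [Nat.pos_iff_ne_zero]
  rintro rfl
  exact pi_ne_zero (left_eq_add.1 (hφ.apply_add 0))

lemma apply_period (hφ : IsHalfTurnGrid n φ) : φ n = φ 0 + π := by
  rw [← hφ.apply_add, zero_add]

lemma step_pos (hφ : IsHalfTurnGrid n φ) (i : ℕ) : 0 < φ (i + 1) - φ i :=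
  sub_pos.2 (hφ.strictMono i.lt_succ_self)

lemma step_add (hφ : IsHalfTurnGrid n φ) (i : ℕ) :
    φ (i + 1 + n) - φ (i + n) = φ (i + 1) - φ i := by
  rw [hφ.apply_add, hφ.apply_add, add_sub_add_right_eq_sub]

lemma antiperiodic_sin_sub (hφ : IsHalfTurnGrid n φ) (α : ℝ) :
    Function.Antiperiodic (fun i => sin (φ i - α)) n :=
  fun i => by simp only [hφ.apply_add, add_sub_right_comm, sin_add_pi]

lemma antiperiodic_sin (hφ : IsHalfTurnGrid n φ) : Function.Antiperiodic (fun i => sin (φ i)) n :=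
  fun i => by simp only [hφ.apply_add, sin_add_pi]

lemma apply_add_mul (hφ : IsHalfTurnGrid n φ) (i k : ℕ) : φ (i + k * n) = φ i + k * π := by
  induction k with
  | zero => simp
  | succ k ih =>
    rw [Nat.succ_mul, ← add_assoc, hφ.apply_add, ih, Nat.cast_succ]
    ring

lemma tendsto_atTop (hφ : IsHalfTurnGrid n φ) : Filter.Tendsto φ Filter.atTop Filter.atTop := by
  refine Filter.tendsto_atTop_atTop_of_monotone hφ.strictMono.monotone fun b => ?_
  obtain ⟨k, hk⟩ := exists_nat_gt ((b - φ 0) / π)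
  refine ⟨0 + k * n, ?_⟩
  rw [div_lt_iff₀ pi_pos] at hk
  linarith [hφ.apply_add_mul 0 k]

end IsHalfTurnGrid

lemma hillEnergy_shift {n : ℕ} {φ q f : ℕ → ℝ} (hφ : IsHalfTurnGrid n φ)
    (hq : Function.Periodic q n) (hf : Function.Antiperiodic f n) (m : ℕ) (α : ℝ) :
    hillEnergy n (fun i => φ (m + i) - α) (fun i => q (m + i)) (fun i => f (m + i))
      = hillEnergy n φ q f := by
  unfold hillEnergy
  have periodic : Function.Periodic
      (fun i => (f (i + 1) - f i) ^ 2 / (φ (i + 1) - φ i) - q i * f (i + 1) ^ 2) n := by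
    intro i
    simp only [add_right_comm i n 1, hφ.step_add, hq i, hf i, hf (i + 1)]
    ring
  rw [← sum_range_add_eq_of_periodic periodic m]
  simp only [sub_sub_sub_cancel_right, add_assoc]

/-- Jacobi's trick: substituting `q = -g'' / g` turns `f' ^ 2 - q f ^ 2` into
`(f' - f g' / g) ^ 2`, up to a summation by parts. -/
lemma hillEnergy_eq_sum_jacobiDefect {n : ℕ} {φ q f g : ℕ → ℝ} (hφ : IsHalfTurnGrid n φ)
    (hill : IsHillSolution φ q g) (hf : Function.Antiperiodic f n) (hg : Function.Antiperiodic g n)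
    (hgf : ∀ i, g i = 0 → f i = 0) :
    hillEnergy n φ q f = ∑ i ∈ Finset.range n,
      jacobiDefect (f i) (f (i + 1)) (g i) (g (i + 1)) / (φ (i + 1) - φ i) := by
  set B : ℕ → ℝ := fun i => f i ^ 2 / g i * ((g (i + 1) - g i) / (φ (i + 1) - φ i)) with hB
  have potential : ∀ i, q i * f (i + 1) ^ 2 = -(f (i + 1) ^ 2 / g (i + 1)) *
      ((g (i + 2) - g (i + 1)) / (φ (i + 2) - φ (i + 1))
        - (g (i + 1) - g i) / (φ (i + 1) - φ i)) := by
    intro i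
    rw [hill i]
    by_cases h : g (i + 1) = 0
    · simp [h, hgf _ h]
    · field_simp
  have by_parts : ∀ i, (f (i + 1) - f i) ^ 2 / (φ (i + 1) - φ i) - q i * f (i + 1) ^ 2
      = jacobiDefect (f i) (f (i + 1)) (g i) (g (i + 1)) / (φ (i + 1) - φ i)
        + (B (1 + i) - B i) := by
    intro i
    simp only [potential, hB, jacobiDefect, add_comm 1 i]
    ring
  have periodic : Function.Periodic B n := by
    intro i
    simp only [hB, add_right_comm i n 1, hφ.step_add, hf i, hg i, hg (i + 1), neg_sq, div_neg]
    ring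
  rw [hillEnergy, Finset.sum_congr rfl fun i _ => by_parts i, Finset.sum_add_distrib,
    Finset.sum_sub_distrib, sum_range_add_eq_of_periodic periodic, sub_self, add_zero]

lemma le_two_mul_sin {x : ℝ} (hx : 0 ≤ x) (hx' : x ≤ π / 2) : x ≤ 2 * sin x := by
  have := mul_le_sin hx hx'
  have : 1 / 2 * x ≤ 2 / π * x := by
    gcongr ?_ * x
    rw [div_le_div_iff₀ two_pos pi_pos]
    linarith [pi_le_four]
  linarith

lemma div_sin_mul_sin_le {x y : ℝ} (hxy : x ≤ y) (hyx : y - x ≤ π / 2) (hx : 0 < sin x)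
    (hy : 0 < sin y) : (y - x) / (sin x * sin y) ≤ 2 * (cot x - cot y) := by
  have cot_sub : cot x - cot y = sin (y - x) / (sin x * sin y) := by
    rw [cot_eq_cos_div_sin, cot_eq_cos_div_sin, sin_sub]
    field_simp
  rw [cot_sub, mul_div_assoc']
  gcongr
  exact le_two_mul_sin (sub_nonneg.2 hxy) hyx

/-- Cauchy–Schwarz, together with `∫ 1 / sin ^ 2 = -cot`. -/
lemma sq_log_div_sin_sub_le {φ g : ℕ → ℝ} {i j : ℕ} (hφ : StrictMono φ) (hij : i ≤ j)
    (mesh : ∀ k, φ (k + 1) - φ k ≤ π / 2) (hsin : ∀ k ∈ Set.Icc i j, 0 < sin (φ k))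
    (hg : ∀ k ∈ Set.Icc i j, 0 < g k) :
    (log (g j / sin (φ j)) - log (g i / sin (φ i))) ^ 2 ≤
      (∑ k ∈ Finset.Ico i j, jacobiDefect (sin (φ k)) (sin (φ (k + 1))) (g k) (g (k + 1))
        / (φ (k + 1) - φ k)) * (2 * (cot (φ i) - cot (φ j))) := by
  set D : ℕ → ℝ := fun k => jacobiDefect (sin (φ k)) (sin (φ (k + 1))) (g k) (g (k + 1))
  have positivity_on : ∀ k ∈ Finset.Ico i j, 0 < sin (φ k) ∧ 0 < sin (φ (k + 1)) ∧
      0 < g k ∧ 0 < g (k + 1) ∧ 0 < φ (k + 1) - φ k := by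
    intro k hk
    rw [Finset.mem_Ico] at hk
    have left : k ∈ Set.Icc i j := ⟨hk.1, hk.2.le⟩
    have right : k + 1 ∈ Set.Icc i j := ⟨by lia, hk.2⟩
    exact ⟨hsin k left, hsin _ right, hg k left, hg _ right, sub_pos.2 (hφ k.lt_succ_self)⟩
  have defect_nonneg : ∀ k ∈ Finset.Ico i j, 0 ≤ D k / (φ (k + 1) - φ k) := by
    intro k hk
    obtain ⟨-, -, hgk, hgk', hstep⟩ := positivity_on k hk
    exact div_nonneg (jacobiDefect_nonneg hgk.le hgk'.le (absurd · hgk.ne') (absurd · hgk'.ne'))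
      hstep.le
  rw [← Finset.sum_Ico_sub (fun k => log (g k / sin (φ k))) hij]
  calc _ ≤ (∑ k ∈ Finset.Ico i j, D k / (φ (k + 1) - φ k)) *
        ∑ k ∈ Finset.Ico i j, (φ (k + 1) - φ k) / (sin (φ k) * sin (φ (k + 1))) := by
        refine Finset.sum_sq_le_sum_mul_sum_of_sq_le_mul _ defect_nonneg ?_ ?_
        · intro k hk
          obtain ⟨hs, hs', -, -, hstep⟩ := positivity_on k hk
          positivity
        · intro k hk
          obtain ⟨hs, hs', hgk, hgk', hstep⟩ := positivity_on k hk
          rw [div_mul_div_cancel₀ hstep.ne', le_div_iff₀' (mul_pos hs hs')]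
          exact mul_sq_log_sub_log_le_jacobiDefect hs hs' hgk hgk'
    _ ≤ _ := by
        refine mul_le_mul_of_nonneg_left ?_ (Finset.sum_nonneg defect_nonneg)
        have telescope : cot (φ i) - cot (φ j)
            = ∑ k ∈ Finset.Ico i j, (cot (φ k) - cot (φ (k + 1))) := by
          rw [← neg_sub, ← Finset.sum_Ico_sub (fun k => cot (φ k)) hij, ← Finset.sum_neg_distrib]
          simp only [neg_sub]
        rw [telescope, Finset.mul_sum]
        refine Finset.sum_le_sum fun k hk => ?_
        obtain ⟨hs, hs', -, -, hstep⟩ := positivity_on k hk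
        exact div_sin_mul_sin_le (by linarith) (mesh k) hs hs'

lemma forall_of_periodic {P : ℕ → Prop} {n : ℕ} (hn : 0 < n) (hP : Function.Periodic P n)
    (h : ∀ i < n, P i) (i : ℕ) : P i := by
  rw [← hP.map_mod_nat i]
  exact h _ (i.mod_lt hn)

lemma sq_div_mul_sub_le {f g f₀ g₀ C : ℝ} (hf : 0 < f) (hf' : f ≤ 1) (hg : 0 < g) (hf₀ : 0 < f₀)
    (hg₀ : 0 < g₀) (hC : (log (g / f) - log (g₀ / f₀)) ^ 2 * f ≤ C) (hCf : C ≤ f) :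
    (f₀ / g₀ * g - f) ^ 2 ≤ 4 * C := by
  set L := log (g / f) - log (g₀ / f₀) with hL
  have abs_L_le : |L| ≤ 1 := by
    rw [← sq_le_one_iff_abs_le_one]
    exact le_of_mul_le_mul_right (by linarith) hf
  have error_eq : f₀ / g₀ * g - f = f * (exp L - 1) := by
    rw [hL, exp_sub, exp_log (by positivity), exp_log (by positivity)]
    field_simp
  calc (f₀ / g₀ * g - f) ^ 2 = f ^ 2 * |exp L - 1| ^ 2 := by rw [error_eq, mul_pow, sq_abs]
    _ ≤ f ^ 2 * (2 * |L|) ^ 2 := by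
        gcongr
        exact abs_exp_sub_one_le abs_L_le
    _ = f * (4 * (L ^ 2 * f)) := by
        rw [mul_pow, sq_abs]
        ring
    _ ≤ 1 * (4 * C) := by gcongr
    _ = 4 * C := one_mul _

/-- A solution `g` of the Hill equation that agrees with `sin φ` at both ends of the edge on which
`sin φ` changes sign. As `g` then vanishes only where `sin φ` does, it serves as the comparison
solution in Jacobi's trick for the test function `sin φ`. -/
structure IsMatchedSolution (n : ℕ) (φ q g : ℕ → ℝ) : Prop where
  hill : IsHillSolution φ q g
  antiperiodic : Function.Antiperiodic g n
  phase_zero_neg : φ 0 < 0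
  phase_one_nonneg : 0 ≤ φ 1
  eq_sin_zero : g 0 = sin (φ 0)
  eq_sin_one : g 1 = sin (φ 1)
  pos : ∀ i, 2 ≤ i → i < n → 0 < g i

namespace IsMatchedSolution

variable {n : ℕ} {φ q g : ℕ → ℝ}

lemma sin_pos (hg : IsMatchedSolution n φ q g) (hφ : IsHalfTurnGrid n φ) {i : ℕ} (hi : 2 ≤ i)
    (hin : i ≤ n) : 0 < sin (φ i) := by
  have lower := hφ.strictMono (show 1 < i from hi)
  have upper := hφ.strictMono.monotone hin
  exact sin_pos_of_pos_of_lt_pi (by linarith [hg.phase_one_nonneg])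
    (by linarith [hg.phase_zero_neg, hφ.apply_period])

lemma solution_pos (hg : IsMatchedSolution n φ q g) (hφ : IsHalfTurnGrid n φ) {i : ℕ} (hi : 2 ≤ i)
    (hin : i ≤ n) : 0 < g i := by
  rcases hin.lt_or_eq with hin | rfl
  · exact hg.pos i hi hin
  · have g_eq := hg.antiperiodic 0
    have sin_eq := hφ.antiperiodic_sin 0
    simp only [zero_add] at g_eq sin_eq
    rw [g_eq, hg.eq_sin_zero, ← sin_eq]
    exact hg.sin_pos hφ hi le_rfl

lemma sin_eq_zero (hg : IsMatchedSolution n φ q g) (hφ : IsHalfTurnGrid n φ) :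
    ∀ i, g i = 0 → sin (φ i) = 0 := by
  refine forall_of_periodic hφ.period_pos (fun i => ?_) fun i hi hgi => ?_
  · simp only [hg.antiperiodic i, hφ.apply_add, sin_add_pi, neg_eq_zero]
  · obtain rfl | rfl | h : i = 0 ∨ i = 1 ∨ 2 ≤ i := by lia
    · rw [← hg.eq_sin_zero, hgi]
    · rw [← hg.eq_sin_one, hgi]
    · exact absurd hgi (hg.pos i h hi).ne'

lemma defect_nonneg (hg : IsMatchedSolution n φ q g) (hφ : IsHalfTurnGrid n φ) {i : ℕ}
    (hin : i < n) : 0 ≤ jacobiDefect (sin (φ i)) (sin (φ (i + 1))) (g i) (g (i + 1)) := by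
  obtain rfl | hi : i = 0 ∨ 1 ≤ i := by lia
  · rw [zero_add, hg.eq_sin_zero, hg.eq_sin_one, jacobiDefect_self]
  refine jacobiDefect_nonneg ?_ (hg.solution_pos hφ (by lia) hin).le
    (hg.sin_eq_zero hφ i) (hg.sin_eq_zero hφ _)
  obtain rfl | hi : i = 1 ∨ 2 ≤ i := by lia
  · rw [hg.eq_sin_one]
    have := hφ.strictMono.monotone hin.le
    exact sin_nonneg_of_nonneg_of_le_pi hg.phase_one_nonneg
      (by linarith [hg.phase_zero_neg, hφ.apply_period])
  · exact (hg.pos i hi hin).le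

lemma hillEnergy_sin_eq (hg : IsMatchedSolution n φ q g) (hφ : IsHalfTurnGrid n φ) :
    hillEnergy n φ q (fun i => sin (φ i)) = ∑ i ∈ Finset.range n,
      jacobiDefect (sin (φ i)) (sin (φ (i + 1))) (g i) (g (i + 1)) / (φ (i + 1) - φ i) :=
  hillEnergy_eq_sum_jacobiDefect hφ hg.hill hφ.antiperiodic_sin hg.antiperiodic (hg.sin_eq_zero hφ)

lemma hillEnergy_sin_nonneg (hg : IsMatchedSolution n φ q g) (hφ : IsHalfTurnGrid n φ) :
    0 ≤ hillEnergy n φ q (fun i => sin (φ i)) := by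
  rw [hg.hillEnergy_sin_eq hφ]
  exact Finset.sum_nonneg fun i hi =>
    div_nonneg (hg.defect_nonneg hφ (Finset.mem_range.1 hi)) (hφ.step_pos i).le

lemma sq_log_sub_le (hg : IsMatchedSolution n φ q g) (hφ : IsHalfTurnGrid n φ)
    (mesh : ∀ k, φ (k + 1) - φ k ≤ π / 2) {i j : ℕ} (hi : 2 ≤ i) (hij : i ≤ j) (hj : j ≤ n) :
    (log (g j / sin (φ j)) - log (g i / sin (φ i))) ^ 2 ≤
      hillEnergy n φ q (fun i => sin (φ i)) * (2 * (|cot (φ i)| + |cot (φ j)|)) := by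
  have term_nonneg : ∀ k ∈ Finset.range n, 0 ≤ jacobiDefect (sin (φ k)) (sin (φ (k + 1))) (g k)
      (g (k + 1)) / (φ (k + 1) - φ k) := fun k hk =>
    div_nonneg (hg.defect_nonneg hφ (Finset.mem_range.1 hk)) (hφ.step_pos k).le
  have subset : Finset.Ico i j ⊆ Finset.range n := fun k hk =>
    Finset.mem_range.2 ((Finset.mem_Ico.1 hk).2.trans_le hj)
  calc _ ≤ _ := sq_log_div_sin_sub_le hφ.strictMono hij mesh
        (fun k hk => hg.sin_pos hφ (hi.trans hk.1) (hk.2.trans hj))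
        fun k hk => hg.solution_pos hφ (hi.trans hk.1) (hk.2.trans hj)
    _ ≤ (∑ k ∈ Finset.Ico i j, jacobiDefect (sin (φ k)) (sin (φ (k + 1))) (g k) (g (k + 1))
        / (φ (k + 1) - φ k)) * (2 * (|cot (φ i)| + |cot (φ j)|)) := by
      gcongr
      · exact Finset.sum_nonneg fun k hk => term_nonneg k (subset hk)
      · linarith [le_abs_self (cot (φ i)), neg_abs_le (cot (φ j))]
    _ ≤ _ := by
      rw [hg.hillEnergy_sin_eq hφ]
      gcongr
      exact fun k hk _ => term_nonneg k hk

lemma sq_log_sub_mul_sin_le (hg : IsMatchedSolution n φ q g) (hφ : IsHalfTurnGrid n φ)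
    (mesh : ∀ k, φ (k + 1) - φ k ≤ π / 2) {m j : ℕ} (hm : 2 ≤ m) (hmn : m ≤ n)
    (hsin : 1 / 2 ≤ sin (φ m)) (hj : 2 ≤ j) (hjn : j ≤ n) :
    (log (g j / sin (φ j)) - log (g m / sin (φ m))) ^ 2 * sin (φ j) ≤
      6 * hillEnergy n φ q (fun i => sin (φ i)) := by
  have hsj := hg.sin_pos hφ hj hjn
  have abs_cot_mul_sin_le : ∀ {x}, 0 < sin x → |cot x| * sin x ≤ 1 := fun {x} hx => by
    rw [cot_eq_cos_div_sin, abs_div, abs_of_pos hx, div_mul_cancel₀ _ hx.ne']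
    exact abs_cos_le_one x
  have cot_m_le : |cot (φ m)| ≤ 2 := by
    nlinarith [abs_cot_mul_sin_le (one_half_pos.trans_le hsin), abs_nonneg (cot (φ m))]
  have log_sq_le : (log (g j / sin (φ j)) - log (g m / sin (φ m))) ^ 2 ≤
      hillEnergy n φ q (fun i => sin (φ i)) * (2 * (|cot (φ m)| + |cot (φ j)|)) := by
    rcases le_total m j with h | h
    · exact hg.sq_log_sub_le hφ mesh hm h hjn
    · rw [sub_sq_comm, add_comm]
      exact hg.sq_log_sub_le hφ mesh hj h hmn
  calc _ ≤ hillEnergy n φ q (fun i => sin (φ i)) * (2 * (|cot (φ m)| + |cot (φ j)|))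
        * sin (φ j) := by gcongr
    _ = hillEnergy n φ q (fun i => sin (φ i)) *
        (2 * (|cot (φ m)| * sin (φ j) + |cot (φ j)| * sin (φ j))) := by ring
    _ ≤ hillEnergy n φ q (fun i => sin (φ i)) * (2 * (2 * 1 + 1)) := by
      gcongr
      · exact hg.hillEnergy_sin_nonneg hφ
      · exact sin_le_one _
      · exact abs_cot_mul_sin_le hsj
    _ = _ := by ring

lemma exists_half_le_sin (hg : IsMatchedSolution n φ q g) (hφ : IsHalfTurnGrid n φ)
    (mesh : ∀ k, φ (k + 1) - φ k ≤ 1 / 2) : ∃ m, 2 ≤ m ∧ m ≤ n ∧ 1 / 2 ≤ sin (φ m) := by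
  have hπ := pi_gt_three
  have h0 := hg.phase_zero_neg
  have h1 := hg.phase_one_nonneg
  obtain ⟨m, hm, hm'⟩ := hφ.strictMono.exists_between_of_tendsto_atTop hφ.tendsto_atTop
    (show φ 0 < π / 2 by linarith)
  refine ⟨m, ?_, ?_, ?_⟩
  · by_contra! h
    have := hφ.strictMono.monotone (show m + 1 ≤ 2 by lia)
    linarith [mesh 0, mesh 1]
  · by_contra! h
    have := hφ.strictMono.monotone h.le
    linarith [hφ.apply_period, mesh 0]
  · rw [← cos_pi_div_two_sub]
    have close : (π / 2 - φ m) ^ 2 ≤ 1 := pow_le_one₀ (by linarith) (by linarith [mesh m])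
    linarith [one_sub_sq_div_two_le_cos (x := π / 2 - φ m)]

lemma two_le_of_step_lt_abs_sin (hg : IsMatchedSolution n φ q g) {j : ℕ}
    (hj : φ 1 - φ 0 < |sin (φ j)|) : 2 ≤ j := by
  have h0 := hg.phase_zero_neg
  have h1 := hg.phase_one_nonneg
  by_contra! hj2
  have close : |φ j| ≤ φ 1 - φ 0 := by
    obtain rfl | rfl : j = 0 ∨ j = 1 := by lia
    all_goals exact abs_le.2 ⟨by linarith, by linarith⟩
  exact (abs_sin_le_abs.trans close).not_gt hj

theorem exists_mul_close_sin (hg : IsMatchedSolution n φ q g) (hφ : IsHalfTurnGrid n φ) {δ : ℝ}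
    (hδ : 0 < δ) (hδ' : δ ≤ 1 / 2) (mesh : ∀ k, φ (k + 1) - φ k ≤ δ ^ 2)
    (energy : hillEnergy n φ q (fun i => sin (φ i)) ≤ δ ^ 2) :
    ∃ c, ∀ j, 6 * δ ^ 2 ≤ |sin (φ j)| → |c * g j - sin (φ j)| ≤ 5 * δ := by
  have δ_sq_pos : 0 < δ ^ 2 := by positivity
  have δ_sq_le : δ ^ 2 ≤ 1 / 4 := by nlinarith
  obtain ⟨m, hm, hmn, hsm⟩ := hg.exists_half_le_sin hφ fun k => (mesh k).trans (by linarith)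
  refine ⟨sin (φ m) / g m, forall_of_periodic hφ.period_pos (fun i => ?_) fun j hjn hj => ?_⟩
  · simp only [hg.antiperiodic i, hφ.apply_add, sin_add_pi, abs_neg, mul_neg, neg_sub_neg,
      abs_sub_comm]
  have two_le : 2 ≤ j := hg.two_le_of_step_lt_abs_sin (by linarith [mesh 0])
  have hsj := hg.sin_pos hφ two_le hjn.le
  rw [abs_of_pos hsj] at hj
  have log_ratio_sq_le : (log (g j / sin (φ j)) - log (g m / sin (φ m))) ^ 2 * sin (φ j)
      ≤ 6 * δ ^ 2 :=
    (hg.sq_log_sub_mul_sin_le hφ (fun k => (mesh k).trans (by linarith [pi_gt_three])) hm hmn hsm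
      two_le hjn.le).trans (by gcongr)
  have error_sq_le := sq_div_mul_sub_le hsj (sin_le_one _) (hg.solution_pos hφ two_le hjn.le)
    (hg.sin_pos hφ hm hmn) (hg.solution_pos hφ hm hmn) log_ratio_sq_le hj
  exact abs_le_of_sq_le_sq (by linarith [mul_pow 5 δ 2]) (by positivity)

end IsMatchedSolution

lemma hillEnergy_neg (n : ℕ) (φ q f : ℕ → ℝ) :
    hillEnergy n φ q (fun i => -f i) = hillEnergy n φ q f := by
  simp only [hillEnergy, neg_sub_neg, neg_sq, sub_sq_comm]

/-- The chord of a circular arc is shorter than the arc. -/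
lemma hillEnergy_sin_add_hillEnergy_cos_le {n : ℕ} {φ : ℕ → ℝ} (hφ : IsHalfTurnGrid n φ)
    (q : ℕ → ℝ) : hillEnergy n φ q (fun i => sin (φ i)) + hillEnergy n φ q (fun i => cos (φ i))
      ≤ π - ∑ i ∈ Finset.range n, q i := by
  have half_turn : ∑ i ∈ Finset.range n, (φ (i + 1) - φ i) = π := by
    rw [Finset.sum_range_sub, hφ.apply_period, add_sub_cancel_left]
  rw [hillEnergy, hillEnergy, ← half_turn, ← Finset.sum_add_distrib, ← Finset.sum_sub_distrib]
  refine Finset.sum_le_sum fun i _ => ?_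
  have chord_sq_le : (sin (φ (i + 1)) - sin (φ i)) ^ 2 + (cos (φ (i + 1)) - cos (φ i)) ^ 2
      ≤ (φ (i + 1) - φ i) ^ 2 := by
    have := one_sub_sq_div_two_le_cos (x := φ (i + 1) - φ i)
    rw [cos_sub] at this
    nlinarith [sin_sq_add_cos_sq (φ (i + 1)), sin_sq_add_cos_sq (φ i)]
  have chord_div_le : ((sin (φ (i + 1)) - sin (φ i)) ^ 2 + (cos (φ (i + 1)) - cos (φ i)) ^ 2)
      / (φ (i + 1) - φ i) ≤ φ (i + 1) - φ i := by
    rw [div_le_iff₀ (hφ.step_pos i), ← sq]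
    exact chord_sq_le
  have potential : q i * sin (φ (i + 1)) ^ 2 + q i * cos (φ (i + 1)) ^ 2 = q i := by
    rw [← mul_add, sin_sq_add_cos_sq, mul_one]
  rw [add_div] at chord_div_le
  linarith

lemma abs_sin_two_mul_le_sin (x : ℝ) : |sin (2 * x)| ≤ 2 * |sin x| := by
  rw [sin_two_mul, abs_mul, abs_mul, abs_two]
  exact mul_le_of_le_one_right (by positivity) (abs_cos_le_one x)

lemma abs_sin_two_mul_le_cos (x : ℝ) : |sin (2 * x)| ≤ 2 * |cos x| := by
  rw [sin_two_mul, abs_mul, abs_mul, abs_two, mul_right_comm]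
  exact mul_le_of_le_one_right (by positivity) (abs_sin_le_one x)

lemma exists_le_abs_sin_two_mul (ψ : ℝ) {δ : ℝ} (hδ : 0 ≤ δ) (hδ' : δ ≤ π / 2) :
    ∃ t, ψ ≤ t ∧ t ≤ ψ + δ / 2 ∧ δ / 4 ≤ |sin (2 * t)| := by
  have addition : sin δ ≤ |sin (2 * (ψ + δ / 2))| + |sin (2 * ψ)| :=
    calc sin δ = sin (2 * (ψ + δ / 2)) * cos (2 * ψ) - cos (2 * (ψ + δ / 2)) * sin (2 * ψ) := by
          rw [← sin_sub]
          congr 1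
          ring
      _ ≤ |sin (2 * (ψ + δ / 2)) * cos (2 * ψ)| + |cos (2 * (ψ + δ / 2)) * sin (2 * ψ)| :=
          (le_abs_self _).trans (abs_sub _ _)
      _ ≤ _ := by
          rw [abs_mul, abs_mul]
          exact add_le_add (mul_le_of_le_one_right (abs_nonneg _) (abs_cos_le_one _))
            (mul_le_of_le_one_left (abs_nonneg _) (abs_cos_le_one _))
  have := le_two_mul_sin hδ hδ'
  by_cases h : δ / 4 ≤ |sin (2 * ψ)|
  · exact ⟨ψ, le_rfl, by linarith, h⟩
  · exact ⟨ψ + δ / 2, by linarith, le_rfl, by linarith⟩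

lemma IsHalfTurnGrid.exists_near_avoiding_axes {n : ℕ} {φ : ℕ → ℝ} (hφ : IsHalfTurnGrid n φ)
    {δ ψ : ℝ} (hδ : 0 < δ) (hδ' : δ ≤ 1 / 100) (mesh : ∀ k, φ (k + 1) - φ k ≤ δ ^ 2)
    (hψ : φ 0 < ψ) :
    ∃ j, |φ j - ψ| ≤ δ ∧ 6 * δ ^ 2 ≤ |sin (φ j)| ∧ 6 * δ ^ 2 ≤ |cos (φ j)| := by
  have hδ2 : δ ^ 2 ≤ δ / 100 := by nlinarith
  obtain ⟨t, hψt, htψ, ht⟩ := exists_le_abs_sin_two_mul ψ hδ.le (by linarith [pi_gt_three])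
  obtain ⟨j, hjt, htj⟩ := hφ.strictMono.exists_between_of_tendsto_atTop hφ.tendsto_atTop
    (hψ.trans_le hψt)
  have sin_close : |sin (2 * t)| - |sin (2 * φ j)| ≤ 2 * δ ^ 2 := by
    refine (abs_sub_abs_le_abs_sub _ _).trans ((abs_sin_sub_sin_le _ _).trans ?_)
    rw [abs_le]
    constructor <;> linarith [mesh j]
  refine ⟨j, abs_le.2 ⟨by linarith [mesh j], by linarith⟩, ?_, ?_⟩
  · linarith [abs_sin_two_mul_le_sin (φ j)]
  · linarith [abs_sin_two_mul_le_cos (φ j)]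

/-! ### Polygons and their polars -/

instance : Fact (Module.finrank ℝ E2 = 2) := ⟨finrank_euclideanSpace_fin⟩

/-- The standard orientation of the plane. -/
def stdOrientation : Orientation ℝ E2 (Fin 2) :=
  (EuclideanSpace.basisFun (Fin 2) ℝ).toBasis.orientation

/-- The determinant of two plane vectors. -/
def wedge : E2 →ₗ[ℝ] E2 →ₗ[ℝ] ℝ := stdOrientation.areaForm

lemma wedge_apply (a b : E2) : wedge a b = a 0 * b 1 - a 1 * b 0 := by
  rw [wedge, stdOrientation, Orientation.areaForm_to_volumeForm,
    Orientation.volumeForm_robust _ (EuclideanSpace.basisFun (Fin 2) ℝ) rfl,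
    Module.Basis.det_apply, Matrix.det_fin_two]
  simp [Module.Basis.toMatrix_apply, mul_comm]

lemma wedge_self (a : E2) : wedge a a = 0 := Orientation.areaForm_apply_self _ a

lemma wedge_swap (a b : E2) : wedge a b = -wedge b a := Orientation.areaForm_swap _ a b

lemma abs_wedge_le (a b : E2) : |wedge a b| ≤ ‖a‖ * ‖b‖ := Orientation.abs_areaForm_le _ a b

lemma wedge_smul_eq (a b y : E2) : wedge a b • y = wedge y b • a + wedge a y • b := by
  ext i
  fin_cases i <;> simp [wedge_apply] <;> ring

/-- `x` lists counterclockwise the vertices of an `o`-symmetric `2 n`-gon that is star-shaped about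
the origin; convexity is not required. -/
structure IsSymmPolygon (n : ℕ) (x : ℕ → E2) : Prop where
  antiperiodic : Function.Antiperiodic x n
  wedge_pos : ∀ i j, i < j → j < i + n → 0 < wedge (x i) (x j)
  two_le : 2 ≤ n

/-- Twice the area of the triangle spanned by the origin and the `i`-th edge. -/
def edgeDet (x : ℕ → E2) (i : ℕ) : ℝ := wedge (x i) (x (i + 1))

lemma edgeDet_periodic {n : ℕ} {x : ℕ → E2} (hx : Function.Antiperiodic x n) :
    Function.Periodic (edgeDet x) n := by
  intro i
  rw [edgeDet, add_right_comm, hx, hx, map_neg, map_neg, LinearMap.neg_apply, neg_neg, edgeDet]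

/-- The vertex of the polar polygon dual to the `i`-th edge: the point with inner product `1` with
both endpoints of that edge. -/
def dualVertex (x : ℕ → E2) (i : ℕ) : E2 :=
  (edgeDet x i)⁻¹ • stdOrientation.rightAngleRotation (x i - x (i + 1))

lemma dualVertex_antiperiodic {n : ℕ} {x : ℕ → E2} (hx : Function.Antiperiodic x n) :
    Function.Antiperiodic (dualVertex x) n := by
  intro i
  rw [dualVertex, edgeDet_periodic hx, add_right_comm, hx, hx, neg_sub_neg, ← neg_sub (x i),
    map_neg, smul_neg, dualVertex]

lemma edgeDet_dualVertex (x : ℕ → E2) (i : ℕ) : edgeDet (dualVertex x) i =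
    (edgeDet x i + edgeDet x (i + 1) - wedge (x i) (x (i + 2))) /
      (edgeDet x i * edgeDet x (i + 1)) := by
  have rotated : wedge (stdOrientation.rightAngleRotation (x i - x (i + 1)))
      (stdOrientation.rightAngleRotation (x (i + 1) - x (i + 2))) =
        edgeDet x i + edgeDet x (i + 1) - wedge (x i) (x (i + 2)) := by
    rw [wedge, Orientation.areaForm_comp_rightAngleRotation, ← wedge]
    simp only [map_sub, LinearMap.sub_apply, wedge_self, edgeDet]
    ring
  rw [edgeDet, dualVertex, dualVertex, map_smul, map_smul, LinearMap.smul_apply, rotated,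
    smul_eq_mul, smul_eq_mul, div_eq_inv_mul, mul_inv]
  ring

/-- The area of the `o`-symmetric `2 n`-gon with vertices `x`: each of the `n` pairs of opposite
edges contributes two triangles. -/
def symmPolygonArea (n : ℕ) (x : ℕ → E2) : ℝ := ∑ i ∈ Finset.range n, edgeDet x i

/-- The area swept out along the polygon from `x 0` to `x i`, normalized so that the whole polygon
accounts for the angle `2 π`. -/
def sweptAngle (n : ℕ) (x : ℕ → E2) (i : ℕ) : ℝ :=
  π / symmPolygonArea n x * ∑ k ∈ Finset.range i, edgeDet x k

lemma sweptAngle_step (n : ℕ) (x : ℕ → E2) (i : ℕ) :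
    sweptAngle n x (i + 1) - sweptAngle n x i = π / symmPolygonArea n x * edgeDet x i := by
  rw [sweptAngle, sweptAngle, ← mul_sub, Finset.sum_range_succ, add_sub_cancel_left]

lemma sweptAngle_zero (n : ℕ) (x : ℕ → E2) : sweptAngle n x 0 = 0 := by
  rw [sweptAngle, Finset.sum_range_zero, mul_zero]

/-- The potential of the Hill equation solved by the vertices of a polygon in the parameter
`sweptAngle`. -/
def hillPotential (n : ℕ) (x : ℕ → E2) (i : ℕ) : ℝ :=
  symmPolygonArea n x / π * edgeDet (dualVertex x) i

namespace IsSymmPolygon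

variable {n : ℕ} {x : ℕ → E2}

lemma edgeDet_pos (hx : IsSymmPolygon n x) (i : ℕ) : 0 < edgeDet x i :=
  hx.wedge_pos _ _ i.lt_succ_self (Nat.add_lt_add_left hx.two_le i)

lemma hillPotential_periodic (hx : IsSymmPolygon n x) :
    Function.Periodic (hillPotential n x) n := by
  intro i
  rw [hillPotential, hillPotential, edgeDet_periodic (dualVertex_antiperiodic hx.antiperiodic)]

lemma symmPolygonArea_pos (hx : IsSymmPolygon n x) : 0 < symmPolygonArea n x :=
  Finset.sum_pos (fun i _ => hx.edgeDet_pos i)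
    (Finset.nonempty_range_iff.2 (two_pos.trans_le hx.two_le).ne')

lemma isHalfTurnGrid (hx : IsSymmPolygon n x) : IsHalfTurnGrid n (sweptAngle n x) where
  strictMono := strictMono_nat_of_lt_succ fun i => by
    rw [← sub_pos, sweptAngle_step]
    exact mul_pos (div_pos pi_pos hx.symmPolygonArea_pos) (hx.edgeDet_pos i)
  apply_add i := by
    have split : ∑ k ∈ Finset.range (i + n), edgeDet x k
        = ∑ k ∈ Finset.range i, edgeDet x k + symmPolygonArea n x := by
      rw [Finset.sum_range_add,
        sum_range_add_eq_of_periodic (edgeDet_periodic hx.antiperiodic), symmPolygonArea]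
    rw [sweptAngle, split, mul_add, div_mul_cancel₀ _ hx.symmPolygonArea_pos.ne', sweptAngle]

lemma isHillSolution (hx : IsSymmPolygon n x) (ℓ : E2 →ₗ[ℝ] ℝ) :
    IsHillSolution (sweptAngle n x) (hillPotential n x) (fun i => ℓ (x i)) := by
  intro i
  have d₀ := (hx.edgeDet_pos i).ne'
  have d₁ := (hx.edgeDet_pos (i + 1)).ne'
  have S := hx.symmPolygonArea_pos.ne'
  have dependence : wedge (x i) (x (i + 2)) * ℓ (x (i + 1))
      = edgeDet x (i + 1) * ℓ (x i) + edgeDet x i * ℓ (x (i + 2)) := by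
    have := congrArg ℓ (wedge_smul_eq (x i) (x (i + 2)) (x (i + 1)))
    simp only [map_add, map_smul, smul_eq_mul] at this
    exact this
  rw [sweptAngle_step, show i + 2 = i + 1 + 1 from rfl, sweptAngle_step, hillPotential,
    edgeDet_dualVertex]
  field_simp
  linear_combination -dependence

lemma exists_linear_of_edge (hx : IsSymmPolygon n x) (m : ℕ) {s₀ s₁ : ℝ} (hs₀ : s₀ < 0)
    (hs₁ : 0 ≤ s₁) : ∃ ℓ : E2 →ₗ[ℝ] ℝ, ℓ (x m) = s₀ ∧ ℓ (x (m + 1)) = s₁ ∧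
      ∀ i, 2 ≤ i → i < n → 0 < ℓ (x (m + i)) := by
  have d := hx.edgeDet_pos m
  set ℓ := wedge ((edgeDet x m)⁻¹ • (s₁ • x m - s₀ • x (m + 1)))
  have ℓ_apply : ∀ v, ℓ v = (edgeDet x m)⁻¹ * (s₁ * wedge (x m) v - s₀ * wedge (x (m + 1)) v) := by
    intro v
    simp only [ℓ, map_smul, map_sub, LinearMap.smul_apply, LinearMap.sub_apply, smul_eq_mul]
  refine ⟨ℓ, ?_, ?_, fun i hi hin => ?_⟩
  · rw [ℓ_apply, wedge_self, wedge_swap (x (m + 1)) (x m), ← edgeDet]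
    field_simp
    ring
  · rw [ℓ_apply, wedge_self, ← edgeDet]
    field_simp
    ring
  · have w₀ := mul_nonneg hs₁ (hx.wedge_pos m (m + i) (by lia) (by lia)).le
    have w₁ := mul_neg_of_neg_of_pos hs₀ (hx.wedge_pos (m + 1) (m + i) (by lia) (by lia))
    rw [ℓ_apply]
    exact mul_pos (inv_pos.2 d) (by linarith)

lemma exists_isMatchedSolution (hx : IsSymmPolygon n x) {α : ℝ} (hα : 0 < α) :
    ∃ (m : ℕ) (ℓ : E2 →ₗ[ℝ] ℝ), IsMatchedSolution n (fun i => sweptAngle n x (m + i) - α)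
      (fun i => hillPotential n x (m + i)) (fun i => ℓ (x (m + i))) := by
  have hφ := hx.isHalfTurnGrid
  obtain ⟨m, hm, hm'⟩ := hφ.strictMono.exists_between_of_tendsto_atTop hφ.tendsto_atTop
    (show sweptAngle n x 0 < α by rwa [sweptAngle_zero])
  have step_lt : sweptAngle n x (m + 1) < sweptAngle n x m + π := by
    rw [← hφ.apply_add]
    exact hφ.strictMono (Nat.add_lt_add_left hx.two_le m)
  obtain ⟨ℓ, ℓ_zero, ℓ_one, ℓ_pos⟩ := hx.exists_linear_of_edge m
    (s₀ := sin (sweptAngle n x m - α)) (s₁ := sin (sweptAngle n x (m + 1) - α))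
    (sin_neg_of_neg_of_neg_pi_lt (by linarith) (by linarith))
    (sin_nonneg_of_nonneg_of_le_pi (by linarith) (by linarith))
  exact ⟨m, ℓ, {
    hill := (hx.isHillSolution ℓ).shift_sub m α
    antiperiodic := fun i => by simp only [← add_assoc, hx.antiperiodic (m + i), map_neg]
    phase_zero_neg := sub_neg.2 hm
    phase_one_nonneg := sub_nonneg.2 hm'
    eq_sin_zero := ℓ_zero
    eq_sin_one := ℓ_one
    pos := ℓ_pos }⟩

lemma hillEnergy_sin_sub_nonneg (hx : IsSymmPolygon n x) {α : ℝ} (hα : 0 < α) :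
    0 ≤ hillEnergy n (sweptAngle n x) (hillPotential n x)
      (fun i => sin (sweptAngle n x i - α)) := by
  obtain ⟨m, ℓ, hℓ⟩ := hx.exists_isMatchedSolution hα
  have := hℓ.hillEnergy_sin_nonneg (hx.isHalfTurnGrid.shift_sub m α)
  rwa [hillEnergy_shift hx.isHalfTurnGrid hx.hillPotential_periodic
    (hx.isHalfTurnGrid.antiperiodic_sin_sub α)] at this

theorem exists_linear_close_sin_sub (hx : IsSymmPolygon n x) {α δ : ℝ} (hα : 0 < α) (hδ : 0 < δ)
    (hδ' : δ ≤ 1 / 2)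
    (mesh : ∀ k, sweptAngle n x (k + 1) - sweptAngle n x k ≤ δ ^ 2)
    (energy : hillEnergy n (sweptAngle n x) (hillPotential n x)
      (fun i => sin (sweptAngle n x i - α)) ≤ δ ^ 2) :
    ∃ ℓ : E2 →ₗ[ℝ] ℝ, ∀ j, 6 * δ ^ 2 ≤ |sin (sweptAngle n x j - α)| →
      |ℓ (x j) - sin (sweptAngle n x j - α)| ≤ 5 * δ := by
  have hφ := hx.isHalfTurnGrid
  obtain ⟨m, ℓ, hℓ⟩ := hx.exists_isMatchedSolution hα
  obtain ⟨c, hc⟩ := hℓ.exists_mul_close_sin (hφ.shift_sub m α) hδ hδ'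
    (fun k => by rw [sub_sub_sub_cancel_right]; exact mesh (m + k))
    (by rwa [hillEnergy_shift hφ hx.hillPotential_periodic (hφ.antiperiodic_sin_sub α)])
  have periodic : Function.Periodic (fun j => 6 * δ ^ 2 ≤ |sin (sweptAngle n x j - α)| →
      |(c • ℓ) (x j) - sin (sweptAngle n x j - α)| ≤ 5 * δ) n := by
    intro j
    have sin_neg := hφ.antiperiodic_sin_sub α j
    simp only at sin_neg
    simp only [hx.antiperiodic j, sin_neg, map_neg, abs_neg, neg_sub_neg, abs_sub_comm]
  refine ⟨c • ℓ, fun j => ?_⟩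
  have split : j + m * n = m + (j + m * (n - 1)) := by
    obtain ⟨k, rfl⟩ := Nat.exists_eq_add_of_le' (one_le_two.trans hx.two_le)
    rw [Nat.add_sub_cancel]
    ring
  have shifted := periodic.nsmul m j
  simp only [smul_eq_mul, split] at shifted
  exact shifted ▸ hc _

end IsSymmPolygon

/-- The point of the unit circle at angle `θ`. -/
def circlePoint (θ : ℝ) : E2 := !₂[cos θ, sin θ]

lemma wedge_circlePoint (α β : ℝ) : wedge (circlePoint α) (circlePoint β) = sin (β - α) := by
  simp only [wedge_apply, circlePoint, Matrix.cons_val_zero, Matrix.cons_val_one, sin_sub]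
  ring

lemma exists_circlePoint_eq {u : E2} (hu : ‖u‖ = 1) : ∃ ψ, 0 < ψ ∧ circlePoint ψ = u := by
  have norm_eq : ‖(⟨u 0, u 1⟩ : ℂ)‖ = 1 := by
    rw [← hu, EuclideanSpace.norm_eq, Complex.norm_eq_sqrt_sq_add_sq, Fin.sum_univ_two,
      norm_eq_abs, norm_eq_abs, sq_abs, sq_abs]
  have cos_arg := Complex.norm_mul_cos_arg ⟨u 0, u 1⟩
  have sin_arg := Complex.norm_mul_sin_arg ⟨u 0, u 1⟩
  rw [norm_eq, one_mul] at cos_arg sin_arg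
  refine ⟨Complex.arg ⟨u 0, u 1⟩ + 2 * π, ?_, ?_⟩
  · linarith [Complex.neg_pi_lt_arg ⟨u 0, u 1⟩, pi_pos]
  · rw [circlePoint, cos_add_two_pi, sin_add_two_pi, cos_arg, sin_arg]
    ext i
    fin_cases i <;> rfl

lemma norm_le_abs_add_abs (v : E2) : ‖v‖ ≤ |v 0| + |v 1| := by
  rw [EuclideanSpace.norm_eq, Fin.sum_univ_two, norm_eq_abs, norm_eq_abs]
  refine sqrt_le_iff.2 ⟨by positivity, ?_⟩
  linarith [add_sq |v 0| |v 1|, mul_nonneg (abs_nonneg (v 0)) (abs_nonneg (v 1))]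

namespace IsSymmPolygon

variable {n : ℕ} {x : ℕ → E2}

/-- The energies of `sin` and `cos` are nonnegative, and their sum is at most the deficit. -/
lemma hillEnergy_le_of_le_area_mul_area (hx : IsSymmPolygon n x) {δ : ℝ}
    (product : π ^ 2 - π * δ ^ 2 ≤ symmPolygonArea n x * symmPolygonArea n (dualVertex x)) :
    hillEnergy n (sweptAngle n x) (hillPotential n x) (fun i => sin (sweptAngle n x i - π))
        ≤ δ ^ 2 ∧
      hillEnergy n (sweptAngle n x) (hillPotential n x) (fun i => sin (sweptAngle n x i - π / 2))
        ≤ δ ^ 2 := by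
  have total_potential : π - δ ^ 2 ≤ ∑ i ∈ Finset.range n, hillPotential n x i := by
    simp only [hillPotential]
    rw [← Finset.mul_sum, ← symmPolygonArea, div_mul_eq_mul_div, le_div_iff₀ pi_pos]
    linarith
  have deficit := hillEnergy_sin_add_hillEnergy_cos_le hx.isHalfTurnGrid (hillPotential n x)
  have sin_nonneg := hx.hillEnergy_sin_sub_nonneg pi_pos
  have cos_nonneg := hx.hillEnergy_sin_sub_nonneg (half_pos pi_pos)
  simp only [sin_sub_pi, sin_sub_pi_div_two, hillEnergy_neg] at sin_nonneg cos_nonneg ⊢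
  constructor <;> linarith

theorem exists_linear_near_unit_circle (hx : IsSymmPolygon n x) {δ : ℝ} (hδ : 0 < δ)
    (hδ' : δ ≤ 1 / 100) (mesh : ∀ i, π / symmPolygonArea n x * edgeDet x i ≤ δ ^ 2)
    (product : π ^ 2 - π * δ ^ 2 ≤ symmPolygonArea n x * symmPolygonArea n (dualVertex x)) :
    ∃ A : E2 →ₗ[ℝ] E2, ∀ u : E2, ‖u‖ = 1 → ∃ j, ‖A (x j) - u‖ ≤ 12 * δ := by
  set φ := sweptAngle n x
  have mesh_φ : ∀ i, φ (i + 1) - φ i ≤ δ ^ 2 := fun i => by rw [sweptAngle_step]; exact mesh i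
  obtain ⟨sin_energy, cos_energy⟩ := hx.hillEnergy_le_of_le_area_mul_area product
  obtain ⟨s, hs⟩ := hx.exists_linear_close_sin_sub pi_pos hδ (by linarith) mesh_φ sin_energy
  obtain ⟨c, hc⟩ :=
    hx.exists_linear_close_sin_sub (half_pos pi_pos) hδ (by linarith) mesh_φ cos_energy
  simp only [sin_sub_pi, sin_sub_pi_div_two, abs_neg] at hs hc
  set A : E2 →ₗ[ℝ] E2 := (WithLp.linearEquiv 2 ℝ (Fin 2 → ℝ)).symm.toLinearMap ∘ₗ
    LinearMap.pi ![-c, -s]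
  refine ⟨A, fun u hu => ?_⟩
  obtain ⟨ψ, hψ, rfl⟩ := exists_circlePoint_eq hu
  obtain ⟨j, hj, sin_large, cos_large⟩ :=
    hx.isHalfTurnGrid.exists_near_avoiding_axes hδ hδ' mesh_φ ((sweptAngle_zero n x).trans_lt hψ)
  have combine : ∀ {y a b : ℝ}, |y - -a| ≤ 5 * δ → |a - b| ≤ δ → |-y - b| ≤ 6 * δ := by
    intro y a b hya hab
    rw [abs_le] at *
    constructor <;> linarith
  have cos_close := combine (hc j cos_large) ((abs_cos_sub_cos_le (φ j) ψ).trans hj)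
  have sin_close := combine (hs j sin_large) ((abs_sin_sub_sin_le (φ j) ψ).trans hj)
  refine ⟨j, (norm_le_abs_add_abs _).trans ?_⟩
  change |-c (x j) - cos ψ| + |-s (x j) - sin ψ| ≤ 12 * δ
  linarith

end IsSymmPolygon

/-! ### Ellipses close to a norm ball -/

lemma exists_norm_smul_eq {E : Type*} [NormedAddCommGroup E] [NormedSpace ℝ E] {v : E}
    (hv : v ≠ 0) : ∃ u : E, ‖u‖ = 1 ∧ ‖v‖ • u = v :=
  ⟨‖v‖⁻¹ • v, by rw [norm_smul, norm_inv, norm_norm, inv_mul_cancel₀ (norm_ne_zero_iff.2 hv)],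
    smul_inv_smul₀ (norm_ne_zero_iff.2 hv) v⟩

section NearSphere

variable {E : Type*} [NormedAddCommGroup E] [NormedSpace ℝ E] {M : Seminorm ℝ E} {η : ℝ}

lemma seminorm_le_of_near_sphere [FiniteDimensional ℝ E] (hM : Continuous M) (hη : η ≤ 1)
    (near : ∀ u, ‖u‖ = 1 → ∃ v, M v = 1 ∧ ‖v - u‖ ≤ η) (v : E) : (1 - η) * M v ≤ ‖v‖ := by
  rcases eq_or_ne v 0 with rfl | hv
  · simp only [map_zero, mul_zero, norm_zero, le_refl]
  obtain ⟨u, hu, -⟩ := exists_norm_smul_eq hv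
  obtain ⟨w, hw, w_max⟩ := (isCompact_sphere (0 : E) 1).exists_isMaxOn
    ⟨u, mem_sphere_zero_iff_norm.2 hu⟩ hM.continuousOn
  rw [mem_sphere_zero_iff_norm] at hw
  have le_max : ∀ z, M z ≤ M w * ‖z‖ := by
    intro z
    rcases eq_or_ne z 0 with rfl | hz
    · simp only [map_zero, norm_zero, mul_zero, le_refl]
    obtain ⟨y, hy, hz⟩ := exists_norm_smul_eq hz
    calc M z = ‖z‖ * M y := by rw [← hz, map_smul_eq_mul, norm_norm, hz]
      _ ≤ ‖z‖ * M w := by gcongr; exact w_max (mem_sphere_zero_iff_norm.2 hy)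
      _ = M w * ‖z‖ := mul_comm _ _
  obtain ⟨z, hz, hzw⟩ := near w hw
  have max_le : M w ≤ 1 + M w * η :=
    calc M w ≤ M z + M (z - w) := by
          rw [← neg_sub, map_neg_eq_map, ← sub_le_iff_le_add']
          exact (le_abs_self _).trans (abs_sub_map_le_sub M w z)
      _ ≤ 1 + M w * η := by
          rw [hz]
          gcongr
          exact (le_max _).trans (by gcongr)
  calc (1 - η) * M v ≤ (1 - η) * (M w * ‖v‖) := by gcongr; exact le_max v
    _ = (M w - M w * η) * ‖v‖ := by ring
    _ ≤ 1 * ‖v‖ := by gcongr; linarith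
    _ = ‖v‖ := one_mul _

lemma le_seminorm_of_near_sphere (upper : ∀ v, (1 - η) * M v ≤ ‖v‖) (hη : η ≤ 1)
    (near : ∀ u, ‖u‖ = 1 → ∃ v, M v = 1 ∧ ‖v - u‖ ≤ η) (v : E) :
    (1 - 2 * η) * ‖v‖ ≤ (1 - η) * M v := by
  rcases eq_or_ne v 0 with rfl | hv
  · simp only [map_zero, norm_zero, mul_zero, le_refl]
  obtain ⟨u, hu, hv⟩ := exists_norm_smul_eq hv
  obtain ⟨w, hw, hwu⟩ := near u hu
  have triangle_inequality : 1 - M (w - u) ≤ M u := by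
    rw [← hw, sub_le_comm]
    exact (le_abs_self _).trans (abs_sub_map_le_sub M w u)
  have unit : 1 - 2 * η ≤ (1 - η) * M u := by
    nlinarith [(upper (w - u)).trans hwu,
      mul_le_mul_of_nonneg_left triangle_inequality (sub_nonneg.2 hη)]
  calc (1 - 2 * η) * ‖v‖ ≤ (1 - η) * M u * ‖v‖ := by gcongr
    _ = (1 - η) * M v := by
        rw [← congrArg M hv, map_smul_eq_mul, norm_norm]
        ring

lemma surjective_of_near_sphere [FiniteDimensional ℝ E] {F : Type*} [AddCommGroup F] [Module ℝ F]
    {A : F →ₗ[ℝ] E} (hη : η < 1) (near : ∀ u, ‖u‖ = 1 → ∃ x, ‖A x - u‖ ≤ η) :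
    Function.Surjective A := by
  by_contra not_surjective
  rw [← LinearMap.range_eq_top, SetLike.ext_iff, not_forall] at not_surjective
  obtain ⟨r, hηr, hr⟩ := exists_between hη
  obtain ⟨v, hv, far⟩ := riesz_lemma (Submodule.closed_of_finiteDimensional (LinearMap.range A))
    (not_surjective.imp fun v hv h => hv (iff_of_true h trivial)) hr
  have v_ne : v ≠ 0 := fun h => hv (h ▸ Submodule.zero_mem _)
  obtain ⟨u, hu, huv⟩ := exists_norm_smul_eq v_ne
  obtain ⟨x, hx⟩ := near u hu
  have := calc r * ‖v‖ ≤ ‖v - A (‖v‖ • x)‖ := far _ (LinearMap.mem_range_self A _)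
    _ = ‖v‖ * ‖A x - u‖ := by
      rw [map_smul, ← congrArg (· - _) huv, ← smul_sub, norm_smul, norm_norm, norm_sub_rev]
    _ ≤ ‖v‖ * η := by gcongr
  nlinarith [norm_pos_iff.2 v_ne]

end NearSphere

/-- The Banach–Mazur distance of `K` from the ellipses centred at the origin is less than `ρ`:
`K` lies between an ellipse and its dilate by a factor `lam < ρ`. -/
def WithinEllipses (K : Set E2) (ρ : ℝ) : Prop :=
  ∃ (T : E2 →ₗ[ℝ] E2) (lam : ℝ), Function.Bijective T ∧ 1 ≤ lam ∧ lam < ρ ∧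
    ⇑T '' Metric.closedBall (0 : E2) 1 ⊆ K ∧
    K ⊆ (fun x => lam • T x) '' Metric.closedBall (0 : E2) 1

theorem withinEllipses_of_near_sphere {N : Seminorm ℝ E2} (hN : Continuous N) {A : E2 →ₗ[ℝ] E2}
    {η : ℝ} (hη : 0 < η) (hη' : η < 1 / 4)
    (near : ∀ u, ‖u‖ = 1 → ∃ x, N x = 1 ∧ ‖A x - u‖ ≤ η) :
    WithinEllipses {x | N x ≤ 1} (1 + 4 * η) := by
  have surjective : Function.Surjective A := surjective_of_near_sphere (by linarith) fun u hu =>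
    (near u hu).imp fun x hx => hx.2
  set e := LinearEquiv.ofBijective A ⟨LinearMap.injective_iff_surjective.2 surjective, surjective⟩
  set M := N.comp e.symm.toLinearMap
  have M_apply : ∀ v, M v = N (e.symm v) := fun v => rfl
  have near_M : ∀ u, ‖u‖ = 1 → ∃ v, M v = 1 ∧ ‖v - u‖ ≤ η := fun u hu =>
    let ⟨x, hx, hxu⟩ := near u hu
    ⟨e x, by rw [M_apply, e.symm_apply_apply, hx], hxu⟩
  have hM : Continuous M := hN.comp (LinearMap.continuous_of_finiteDimensional e.symm.toLinearMap)
  have upper := seminorm_le_of_near_sphere hM (by linarith) near_M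
  have lower := le_seminorm_of_near_sphere upper (by linarith) near_M
  have one_sub_pos : 0 < 1 - η := by linarith
  have one_sub_two_pos : 0 < 1 - 2 * η := by linarith
  refine ⟨(1 - η) • e.symm.toLinearMap, (1 - 2 * η)⁻¹, ?_, ?_, ?_, ?_, fun x hx => ?_⟩
  · exact ((Equiv.smulRight one_sub_pos.ne').bijective (α := E2)).comp e.symm.bijective
  · exact (one_le_inv₀ one_sub_two_pos).2 (by linarith)
  · rw [inv_lt_iff_one_lt_mul₀ one_sub_two_pos]
    nlinarith
  · rintro _ ⟨v, hv, rfl⟩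
    rw [Set.mem_ofPred_eq, LinearMap.smul_apply, map_smul_eq_mul, norm_of_nonneg one_sub_pos.le]
    exact (upper v).trans (mem_closedBall_zero_iff.1 hv)
  · refine ⟨((1 - 2 * η) / (1 - η)) • e x, ?_, ?_⟩
    · rw [mem_closedBall_zero_iff, norm_smul, norm_of_nonneg (by positivity), div_mul_eq_mul_div,
        div_le_one₀ one_sub_pos]
      calc _ ≤ (1 - η) * M (e x) := lower (e x)
        _ ≤ (1 - η) * 1 := by
          gcongr
          rw [M_apply, e.symm_apply_apply]
          exact hx
        _ = 1 - η := mul_one _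
    · simp only [LinearMap.smul_apply, LinearEquiv.coe_coe, map_smul, e.symm_apply_apply, smul_smul]
      rw [div_mul_cancel₀ _ one_sub_pos.ne', inv_mul_cancel₀ one_sub_two_pos.ne', one_smul]

/-! ### Areas of polygons -/

/-- The triangle with vertices `0`, `a` and `b`. -/
def originTriangle (a b : E2) : Set E2 :=
  {z | ∃ s t : ℝ, 0 ≤ s ∧ 0 ≤ t ∧ s + t ≤ 1 ∧ s • a + t • b = z}

lemma volume_unit_triangle_le :
    volume {p : ℝ × ℝ | 0 ≤ p.1 ∧ 0 ≤ p.2 ∧ p.1 + p.2 ≤ 1} ≤ ENNReal.ofReal (1 / 2) := by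
  have measurable : MeasurableSet {p : ℝ × ℝ | 0 ≤ p.1 ∧ 0 ≤ p.2 ∧ p.1 + p.2 ≤ 1} := by
    measurability
  have section_le : ∀ s : ℝ, volume (Prod.mk s ⁻¹' {p : ℝ × ℝ | 0 ≤ p.1 ∧ 0 ≤ p.2 ∧ p.1 + p.2 ≤ 1})
      ≤ (Set.Icc 0 1).indicator (fun s => ENNReal.ofReal (1 - s)) s := by
    intro s
    by_cases hs : s ∈ Set.Icc (0 : ℝ) 1
    · rw [Set.indicator_of_mem hs, ← sub_zero (1 - s), ← volume_Icc]
      exact measure_mono fun t ht => ⟨ht.2.1, le_sub_iff_add_le'.2 ht.2.2⟩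
    · rw [Set.indicator_of_notMem hs]
      refine (measure_mono_null (fun t ht => hs ⟨ht.1, ?_⟩) measure_empty).le
      exact (le_add_of_nonneg_right ht.2.1).trans ht.2.2
  calc _ ≤ ∫⁻ s in Set.Icc (0 : ℝ) 1, ENNReal.ofReal (1 - s) := by
        rw [Measure.volume_eq_prod, Measure.prod_apply measurable,
          ← lintegral_indicator measurableSet_Icc]
        exact lintegral_mono section_le
    _ = ENNReal.ofReal (∫ s in Set.Icc (0 : ℝ) 1, (1 - s)) := by
        refine (ofReal_integral_eq_lintegral_ofReal ?_ ?_).symm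
        · exact (continuous_const.sub continuous_id).integrableOn_Icc
        · exact (ae_restrict_mem measurableSet_Icc).mono fun s hs => sub_nonneg.2 hs.2
    _ = ENNReal.ofReal (1 / 2) := by
        rw [integral_Icc_eq_integral_Ioc, ← intervalIntegral.integral_of_le zero_le_one,
          intervalIntegral.integral_comp_sub_left fun s => s]
        norm_num

lemma volume_originTriangle_le (a b : E2) :
    volume (originTriangle a b) ≤ ENNReal.ofReal (|wedge a b| / 2) := by
  set coords := MeasurableEquiv.finTwoArrow ∘ (WithLp.ofLp : E2 → Fin 2 → ℝ)
  have preserving : MeasurePreserving coords :=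
    (volume_preserving_finTwoArrow ℝ).comp (PiLp.volume_preserving_ofLp (Fin 2))
  set T := {p : ℝ × ℝ | 0 ≤ p.1 ∧ 0 ≤ p.2 ∧ p.1 + p.2 ≤ 1}
  have T_measurable : MeasurableSet T := by measurability
  set f : E2 →ₗ[ℝ] E2 := Matrix.toEuclideanLin !![a 0, b 0; a 1, b 1]
  have det_f : LinearMap.det f = wedge a b := by
    simp only [f, Matrix.toEuclideanLin, Matrix.toLpLin_eq_toLin]
    rw [LinearMap.det_toLin, Matrix.det_fin_two_of, wedge_apply]
    ring
  have image : originTriangle a b ⊆ f '' (coords ⁻¹' T) := by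
    rintro z ⟨s, t, hs, ht, hst, rfl⟩
    refine ⟨!₂[s, t], ⟨hs, ht, hst⟩, ?_⟩
    ext i
    fin_cases i <;> simp [f, Matrix.toEuclideanLin, Matrix.toLpLin]
  calc volume (originTriangle a b) ≤ volume (f '' (coords ⁻¹' T)) := measure_mono image
    _ = ENNReal.ofReal |wedge a b| * volume T := by
        rw [Measure.addHaar_image_linearMap, det_f,
          preserving.measure_preimage T_measurable.nullMeasurableSet]
    _ ≤ ENNReal.ofReal |wedge a b| * ENNReal.ofReal (1 / 2) := by
        gcongr
        exact volume_unit_triangle_le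
    _ = _ := by rw [← ENNReal.ofReal_mul (abs_nonneg _), mul_one_div]

lemma volume_le_symmPolygonArea {K : Set E2} {n : ℕ} {a : ℕ → E2} (hn : 0 < n)
    (ha : Function.Antiperiodic a n) (edgeDet_nonneg : ∀ i, 0 ≤ edgeDet a i)
    (cover : ∀ y ∈ K, ∃ i, y ∈ originTriangle (a i) (a (i + 1))) :
    volume K ≤ ENNReal.ofReal (symmPolygonArea n a) := by
  have periodic : Function.Periodic (fun i => originTriangle (a i) (a (i + 1))) (n + n) := by
    intro i
    simp only [← add_assoc, ha (i + n), ha i, add_right_comm _ _ 1, ha (i + 1 + n), ha (i + 1),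
      neg_neg]
  have subset : K ⊆ ⋃ i ∈ Finset.range (n + n), originTriangle (a i) (a (i + 1)) := by
    intro y hy
    obtain ⟨i, hi⟩ := cover y hy
    rw [← periodic.map_mod_nat i] at hi
    exact Set.mem_iUnion₂_of_mem (Finset.mem_range.2 (i.mod_lt (by lia))) hi
  calc volume K ≤ ∑ i ∈ Finset.range (n + n), volume (originTriangle (a i) (a (i + 1))) :=
        (measure_mono subset).trans (measure_biUnion_finset_le _ _)
    _ ≤ ∑ i ∈ Finset.range (n + n), ENNReal.ofReal (edgeDet a i / 2) := by
        gcongr with i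
        rw [← abs_of_nonneg (edgeDet_nonneg i)]
        exact volume_originTriangle_le _ _
    _ = ENNReal.ofReal (∑ i ∈ Finset.range (n + n), edgeDet a i / 2) :=
        (ENNReal.ofReal_sum_of_nonneg fun i _ => div_nonneg (edgeDet_nonneg i) zero_le_two).symm
    _ = ENNReal.ofReal (symmPolygonArea n a) := by
        rw [← Finset.sum_div, Finset.sum_range_add,
          sum_range_add_eq_of_periodic (edgeDet_periodic ha), ← two_mul, ← symmPolygonArea,
          mul_div_cancel_left₀ _ two_ne_zero]

lemma eq_zero_or_exists_pos_and_succ_nonpos {f : ℕ → ℝ} {n : ℕ} (hf : Function.Antiperiodic f n) :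
    (∀ i, f i = 0) ∨ ∃ i, 0 < f i ∧ f (i + 1) ≤ 0 := by
  by_contra! ⟨⟨j, hj⟩, no_drop⟩
  obtain ⟨i, hi⟩ : ∃ i, 0 < f i := by
    rcases hj.lt_or_gt with hj | hj
    · exact ⟨j + n, by rw [hf]; exact neg_pos.2 hj⟩
    · exact ⟨j, hj⟩
  have stays_pos : ∀ k, 0 < f (i + k) := fun k => by
    induction k with
    | zero => exact hi
    | succ k ih => exact no_drop _ ih
  exact (neg_pos.1 (hf i ▸ stays_pos n)).not_gt hi

lemma mem_originTriangle {a b y : E2} (hab : 0 < wedge a b) (hya : 0 ≤ wedge a y)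
    (hyb : 0 ≤ wedge y b) (h : wedge y b + wedge a y ≤ wedge a b) : y ∈ originTriangle a b := by
  refine ⟨wedge y b / wedge a b, wedge a y / wedge a b, by positivity, by positivity, ?_, ?_⟩
  · rwa [← add_div, div_le_one hab]
  · rw [div_eq_inv_mul, div_eq_inv_mul, mul_smul, mul_smul, ← smul_add, ← wedge_smul_eq,
      inv_smul_smul₀ hab.ne']

lemma one_sub_mul_wedge_add_wedge_le (N : Seminorm ℝ E2) {a b y : E2} (hab : 0 < wedge a b)
    (hya : 0 ≤ wedge a y) (hyb : 0 ≤ wedge y b) (ha : N a = 1) {η : ℝ}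
    (hη : N (b - a) ≤ η) : (1 - η) * (wedge y b + wedge a y) ≤ wedge a b * N y := by
  have split : wedge a b • y = (wedge y b + wedge a y) • a - (-wedge a y) • (b - a) := by
    rw [wedge_smul_eq]
    module
  calc (1 - η) * (wedge y b + wedge a y)
      ≤ (wedge y b + wedge a y) - wedge a y * η := by
        nlinarith [mul_nonneg hyb ((apply_nonneg N _).trans hη)]
    _ ≤ N ((wedge y b + wedge a y) • a) - N ((-wedge a y) • (b - a)) := by
        rw [map_smul_eq_mul, map_smul_eq_mul, ha, norm_neg, norm_of_nonneg hya,
          norm_of_nonneg (add_nonneg hyb hya), mul_one]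
        gcongr
    _ ≤ N (wedge a b • y) := by
        rw [split]
        exact (le_abs_self _).trans (abs_sub_map_le_sub N _ _)
    _ = wedge a b * N y := by rw [map_smul_eq_mul, norm_of_nonneg hab.le]

lemma volume_seminorm_ball_le {N : Seminorm ℝ E2} {n : ℕ} {x : ℕ → E2} (hx : IsSymmPolygon n x)
    (unit : ∀ i, N (x i) = 1) {η : ℝ} (hη : η < 1) (mesh : ∀ i, N (x (i + 1) - x i) ≤ η) :
    volume {y | N y ≤ 1} ≤ ENNReal.ofReal (((1 - η)⁻¹) ^ 2 * symmPolygonArea n x) := by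
  have pos : 0 < 1 - η := sub_pos.2 hη
  set a := fun i => (1 - η)⁻¹ • x i
  have ha : Function.Antiperiodic a n := fun i => by simp only [a, hx.antiperiodic i, smul_neg]
  have wedge_a : ∀ i y, wedge (a i) y = (1 - η)⁻¹ * wedge (x i) y := fun i y => by
    simp only [a, map_smul, LinearMap.smul_apply, smul_eq_mul]
  have wedge_a' : ∀ i y, wedge y (a i) = (1 - η)⁻¹ * wedge y (x i) := fun i y => by
    simp only [a, map_smul, smul_eq_mul]
  have edgeDet_a : ∀ i, edgeDet a i = (1 - η)⁻¹ ^ 2 * edgeDet x i := fun i => by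
    rw [edgeDet, wedge_a, wedge_a', edgeDet]
    ring
  have area : symmPolygonArea n a = (1 - η)⁻¹ ^ 2 * symmPolygonArea n x := by
    simp only [symmPolygonArea, edgeDet_a, Finset.mul_sum]
  rw [← area]
  refine volume_le_symmPolygonArea (two_pos.trans_le hx.two_le) ha
    (fun i => by rw [edgeDet_a]; exact mul_nonneg (sq_nonneg _) (hx.edgeDet_pos i).le) ?_
  intro y hy
  obtain ⟨i, hi, hi'⟩ : ∃ i, 0 ≤ wedge (x i) y ∧ wedge (x (i + 1)) y ≤ 0 := by
    have antiperiodic : Function.Antiperiodic (fun i => wedge (x i) y) n := fun i => by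
      simp only [hx.antiperiodic i, map_neg, LinearMap.neg_apply]
    rcases eq_zero_or_exists_pos_and_succ_nonpos antiperiodic with h | ⟨i, hi, hi'⟩
    exacts [⟨0, (h 0).ge, (h _).le⟩, ⟨i, hi.le, hi'⟩]
  have hi'' : 0 ≤ wedge y (x (i + 1)) := by rwa [wedge_swap, neg_nonneg]
  have sum_le :=
    (one_sub_mul_wedge_add_wedge_le N (hx.edgeDet_pos i) hi hi'' (unit i) (mesh i)).trans
      (mul_le_of_le_one_right (hx.edgeDet_pos i).le hy)
  refine ⟨i, mem_originTriangle ?_ ?_ ?_ ?_⟩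
  · rw [← edgeDet, edgeDet_a]
    exact mul_pos (by positivity) (hx.edgeDet_pos i)
  · rw [wedge_a]
    positivity
  · rw [wedge_a']
    positivity
  · rw [wedge_a, wedge_a', ← edgeDet, edgeDet_a, ← mul_add, sq, mul_assoc]
    gcongr
    rwa [inv_mul_eq_div, le_div_iff₀ pos, mul_comm]

lemma inner_dualVertex (x : ℕ → E2) (i : ℕ) (y : E2) :
    ⟪y, dualVertex x i⟫ = (edgeDet x i)⁻¹ * wedge y (x (i + 1) - x i) := by
  rw [dualVertex, inner_smul_right, Orientation.inner_rightAngleRotation_right, ← wedge,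
    ← map_neg, neg_sub]

lemma wedge_dualVertex (x : ℕ → E2) (i : ℕ) (y : E2) :
    wedge (dualVertex x i) y = (edgeDet x i)⁻¹ * ⟪x (i + 1) - x i, y⟫ := by
  rw [dualVertex, map_smul, LinearMap.smul_apply, wedge,
    Orientation.areaForm_rightAngleRotation_left, ← inner_neg_left, neg_sub, smul_eq_mul]

namespace IsSymmPolygon

variable {n : ℕ} {x : ℕ → E2}

lemma inner_dualVertex_self (hx : IsSymmPolygon n x) (i : ℕ) : ⟪x i, dualVertex x i⟫ = 1 := by
  rw [inner_dualVertex, map_sub, wedge_self, sub_zero, ← edgeDet,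
    inv_mul_cancel₀ (hx.edgeDet_pos i).ne']

lemma inner_succ_dualVertex (hx : IsSymmPolygon n x) (i : ℕ) :
    ⟪x (i + 1), dualVertex x i⟫ = 1 := by
  rw [inner_dualVertex, map_sub, wedge_self, zero_sub, ← wedge_swap, ← edgeDet,
    inv_mul_cancel₀ (hx.edgeDet_pos i).ne']

lemma edgeDet_dualVertex_nonneg (hx : IsSymmPolygon n x) {N : Seminorm ℝ E2}
    (unit : ∀ i, N (x i) = 1) (i : ℕ) : 0 ≤ edgeDet (dualVertex x) i := by
  have d₀ := hx.edgeDet_pos i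
  have d₁ := hx.edgeDet_pos (i + 1)
  rw [edgeDet_dualVertex]
  refine div_nonneg (sub_nonneg.2 ?_) (mul_pos d₀ d₁).le
  calc wedge (x i) (x (i + 2)) ≤ N (wedge (x i) (x (i + 2)) • x (i + 1)) := by
        rw [map_smul_eq_mul, unit, mul_one]
        exact le_norm_self _
    _ ≤ N (edgeDet x (i + 1) • x i) + N (edgeDet x i • x (i + 2)) := by
        rw [wedge_smul_eq]
        exact map_add_le_add _ _ _
    _ = edgeDet x i + edgeDet x (i + 1) := by
        rw [map_smul_eq_mul, map_smul_eq_mul, unit, unit, norm_of_nonneg d₀.le,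
          norm_of_nonneg d₁.le]
        ring

lemma eq_zero_of_inner_eq_zero (hx : IsSymmPolygon n x) {y : E2} (hy : ∀ i, ⟪x i, y⟫ = 0) :
    y = 0 := by
  have self : edgeDet x 0 • y = wedge y (x 1) • x 0 + wedge (x 0) y • x 1 := wedge_smul_eq _ _ _
  have := congrArg (⟪·, y⟫) self
  simp only [inner_add_left, real_inner_smul_left, hy, mul_zero, add_zero, mul_eq_zero,
    inner_self_eq_zero, (hx.edgeDet_pos 0).ne', false_or] at this
  exact this

lemma mem_originTriangle_dualVertex (hx : IsSymmPolygon n x) {N : Seminorm ℝ E2}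
    (unit : ∀ i, N (x i) = 1) {y : E2} {i : ℕ} (rise : 0 < ⟪x (i + 1) - x i, y⟫)
    (fall : ⟪x (i + 2) - x (i + 1), y⟫ ≤ 0) (hy : ⟪x (i + 1), y⟫ ≤ 1) :
    y ∈ originTriangle (dualVertex x i) (dualVertex x (i + 1)) := by
  have wedge_left : 0 < wedge (dualVertex x i) y := by
    rw [wedge_dualVertex]
    exact mul_pos (inv_pos.2 (hx.edgeDet_pos i)) rise
  have wedge_right : 0 ≤ wedge y (dualVertex x (i + 1)) := by
    rw [wedge_swap, wedge_dualVertex, ← mul_neg]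
    exact mul_nonneg (inv_pos.2 (hx.edgeDet_pos _)).le (neg_nonneg.2 fall)
  have sum_eq : wedge y (dualVertex x (i + 1)) + wedge (dualVertex x i) y
      = edgeDet (dualVertex x) i * ⟪x (i + 1), y⟫ := by
    rw [edgeDet, ← real_inner_smul_right, wedge_smul_eq, inner_add_right, real_inner_smul_right,
      real_inner_smul_right, hx.inner_succ_dualVertex, hx.inner_dualVertex_self, mul_one, mul_one]
  have det_nonneg := hx.edgeDet_dualVertex_nonneg unit i
  have det_pos : 0 < edgeDet (dualVertex x) i := by
    refine det_nonneg.lt_of_ne fun h => ?_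
    rw [← h, zero_mul] at sum_eq
    linarith
  refine mem_originTriangle det_pos wedge_left.le wedge_right ?_
  rw [sum_eq]
  exact mul_le_of_le_one_right det_nonneg hy

lemma volume_polarBody_le (hx : IsSymmPolygon n x) {N : Seminorm ℝ E2}
    (unit : ∀ i, N (x i) = 1) :
    volume (polarBody {y | N y ≤ 1}) ≤ ENNReal.ofReal (symmPolygonArea n (dualVertex x)) := by
  refine volume_le_symmPolygonArea (two_pos.trans_le hx.two_le)
    (dualVertex_antiperiodic hx.antiperiodic) (hx.edgeDet_dualVertex_nonneg unit) fun y hy => ?_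
  have antiperiodic : Function.Antiperiodic (fun i => ⟪x (i + 1) - x i, y⟫) n := fun i => by
    simp only [add_right_comm i n 1, hx.antiperiodic i, hx.antiperiodic (i + 1), neg_sub_neg,
      ← inner_neg_left, neg_sub]
  rcases eq_zero_or_exists_pos_and_succ_nonpos antiperiodic with flat | ⟨i, rise, fall⟩
  · have constant : ∀ i, ⟪x i, y⟫ = ⟪x 0, y⟫ := fun i => by
      induction i with
      | zero => rfl
      | succ i ih => rw [← ih, ← sub_eq_zero, ← inner_sub_left, flat]
    have zero : ⟪x 0, y⟫ = 0 := by
      have := constant (0 + n)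
      rwa [hx.antiperiodic 0, inner_neg_left, neg_eq_self] at this
    rw [hx.eq_zero_of_inner_eq_zero fun i => (constant i).trans zero]
    exact ⟨0, 0, 0, le_rfl, le_rfl, by simp only [add_zero, zero_le_one], by
      simp only [zero_smul, add_zero]⟩
  · exact ⟨i, hx.mem_originTriangle_dualVertex unit rise fall (hy _ (unit _).le)⟩

end IsSymmPolygon

/-! ### Inscribed polygons -/

lemma norm_circlePoint (θ : ℝ) : ‖circlePoint θ‖ = 1 := by
  rw [circlePoint, EuclideanSpace.norm_eq, Fin.sum_univ_two]
  simp

lemma norm_circlePoint_sub_le (α β : ℝ) : ‖circlePoint α - circlePoint β‖ ≤ 2 * |α - β| :=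
  calc _ ≤ |cos α - cos β| + |sin α - sin β| := norm_le_abs_add_abs _
    _ ≤ |α - β| + |α - β| := add_le_add (abs_cos_sub_cos_le α β) (abs_sin_sub_sin_le α β)
    _ = _ := (two_mul _).symm

lemma circlePoint_add_pi (θ : ℝ) : circlePoint (θ + π) = -circlePoint θ := by
  ext i
  fin_cases i <;> simp [circlePoint]

/-- The point where the ray from the origin through `v` meets the boundary of the unit ball of
`N`. -/
def boundaryPoint {E : Type*} [AddCommGroup E] [Module ℝ E] (N : Seminorm ℝ E) (v : E) : E :=
  (N v)⁻¹ • v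

section BoundaryPoint

variable {E : Type*} [AddCommGroup E] [Module ℝ E] {N : Seminorm ℝ E} {v w : E}

lemma boundaryPoint_neg : boundaryPoint N (-v) = -boundaryPoint N v := by
  rw [boundaryPoint, map_neg_eq_map, smul_neg, boundaryPoint]

lemma seminorm_boundaryPoint (hv : 0 < N v) : N (boundaryPoint N v) = 1 := by
  rw [boundaryPoint, map_smul_eq_mul, norm_of_nonneg (inv_pos.2 hv).le, inv_mul_cancel₀ hv.ne']

lemma seminorm_boundaryPoint_sub_le (hv : 0 < N v) (hw : 0 < N w) :
    N (boundaryPoint N v - boundaryPoint N w) ≤ 2 * (N v)⁻¹ * N (v - w) := by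
  have split : boundaryPoint N v - boundaryPoint N w
      = (N v)⁻¹ • (v - w) + ((N v)⁻¹ * (N w - N v)) • boundaryPoint N w := by
    rw [boundaryPoint, boundaryPoint, smul_smul, mul_assoc, sub_mul, mul_inv_cancel₀ hw.ne',
      mul_sub, mul_one, inv_mul_cancel_left₀ hv.ne']
    module
  calc _ ≤ (N v)⁻¹ * N (v - w) + (N v)⁻¹ * |N w - N v| := by
        rw [split]
        refine (map_add_le_add _ _ _).trans_eq ?_
        rw [map_smul_eq_mul, map_smul_eq_mul, seminorm_boundaryPoint hw, norm_mul,
          norm_of_nonneg (inv_pos.2 hv).le, mul_one, norm_eq_abs]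
    _ ≤ (N v)⁻¹ * N (v - w) + (N v)⁻¹ * N (v - w) := by
        rw [abs_sub_comm]
        gcongr
        exact abs_sub_map_le_sub N v w
    _ = _ := by ring

end BoundaryPoint

lemma wedge_boundaryPoint (N : Seminorm ℝ E2) (v w : E2) :
    wedge (boundaryPoint N v) (boundaryPoint N w) = (N v)⁻¹ * (N w)⁻¹ * wedge v w := by
  simp only [boundaryPoint, map_smul, LinearMap.smul_apply, smul_eq_mul]
  ring

/-- The polygon inscribed in the unit ball of `N` whose `2 n` vertices lie in equally spaced
directions. -/
def inscribedPolygon (N : Seminorm ℝ E2) (n i : ℕ) : E2 :=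
  boundaryPoint N (circlePoint (i * (π / n)))

lemma isSymmPolygon_inscribedPolygon {N : Seminorm ℝ E2} (hN : ∀ u, ‖u‖ = 1 → 0 < N u) {n : ℕ}
    (hn : 2 ≤ n) : IsSymmPolygon n (inscribedPolygon N n) where
  antiperiodic i := by
    rw [inscribedPolygon, Nat.cast_add, add_mul, mul_div_cancel₀ π (by positivity),
      circlePoint_add_pi, boundaryPoint_neg, inscribedPolygon]
  wedge_pos i j hij hji := by
    have pos : ∀ θ, 0 < N (circlePoint θ) := fun θ => hN _ (norm_circlePoint θ)
    have hij : (0 : ℝ) < j - i := sub_pos.2 (Nat.cast_lt.2 hij)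
    have hji : (j : ℝ) - i < n := sub_lt_iff_lt_add'.2 (by exact_mod_cast hji)
    rw [inscribedPolygon, inscribedPolygon, wedge_boundaryPoint, wedge_circlePoint, ← sub_mul]
    refine mul_pos (mul_pos (inv_pos.2 (pos _)) (inv_pos.2 (pos _))) ?_
    refine sin_pos_of_pos_of_lt_pi (by positivity) ?_
    rwa [mul_div_left_comm, mul_lt_iff_lt_one_right pi_pos, div_lt_one (hij.trans hji)]
  two_le := hn

lemma exists_fine_inscribed_polygon {N : Seminorm ℝ E2} (hN : Continuous N) {r : ℝ} (hr : 0 < r)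
    (lower : ∀ x, r * ‖x‖ ≤ N x) {τ : ℝ} (hτ : 0 < τ) :
    ∃ n x, IsSymmPolygon n x ∧ (∀ i, N (x i) = 1) ∧ ∀ i, N (x (i + 1) - x i) ≤ τ := by
  obtain ⟨C, hC, upper⟩ := N.bound_of_continuous_normedSpace hN
  have unit_pos : ∀ u, ‖u‖ = 1 → 0 < N u := fun u hu =>
    hr.trans_le (by simpa only [hu, mul_one] using lower u)
  have pos : ∀ θ, 0 < N (circlePoint θ) := fun θ => unit_pos _ (norm_circlePoint θ)
  have small : Filter.Tendsto (fun n : ℕ => 2 * r⁻¹ * (C * (2 * (π / n)))) Filter.atTop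
      (nhds 0) := by
    simpa only [mul_zero] using
      (((tendsto_const_div_atTop_nhds_zero_nat π).const_mul 2).const_mul C).const_mul (2 * r⁻¹)
  obtain ⟨n, hn, mesh⟩ := ((Filter.eventually_ge_atTop 2).and (small.eventually_le_const hτ)).exists
  refine ⟨n, inscribedPolygon N n, isSymmPolygon_inscribedPolygon unit_pos hn, fun i =>
    seminorm_boundaryPoint (pos _), fun i => (seminorm_boundaryPoint_sub_le (pos _) (pos _)).trans
      (le_trans ?_ mesh)⟩
  gcongr
  · exact (lower _).trans' (by rw [norm_circlePoint, mul_one])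
  · refine (upper _).trans ?_
    gcongr
    refine (norm_circlePoint_sub_le _ _).trans_eq ?_
    rw [← sub_mul, Nat.cast_succ, add_sub_cancel_left, one_mul, abs_of_nonneg (by positivity)]

lemma exists_seminorm_unit_ball_eq {E : Type*} [NormedAddCommGroup E] [NormedSpace ℝ E]
    {K : Set E} (closed : IsClosed K) (bounded : Bornology.IsBounded K) (convex : Convex ℝ K)
    (nhds_zero : K ∈ nhds 0) (symm : K = -K) :
    ∃ (N : Seminorm ℝ E) (r : ℝ), Continuous N ∧ {x | N x ≤ 1} = K ∧ 0 < r ∧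
      ∀ x, r * ‖x‖ ≤ N x := by
  have balanced : Balanced ℝ K :=
    (balanced_iff_neg_mem convex).2 fun x hx => Set.mem_neg.1 (symm ▸ hx)
  have absorbent : Absorbent ℝ K := absorbent_nhds_zero nhds_zero
  obtain ⟨C, hC, subset⟩ := bounded.subset_closedBall_lt 0 0
  refine ⟨gaugeSeminorm balanced convex absorbent, C⁻¹, continuous_gauge convex nhds_zero,
    Set.ext fun x => ?_, inv_pos.2 hC, fun x => ?_⟩
  · change gauge K x ≤ 1 ↔ _
    rw [gauge_le_one_iff_mem_closure convex nhds_zero, closed.closure_eq]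
  · rw [inv_mul_eq_div]
    exact le_gauge_of_subset_closedBall absorbent hC.le subset

lemma edgeDet_le_of_seminorm_sub_le {N : Seminorm ℝ E2} {r : ℝ} (hr : 0 < r)
    (lower : ∀ x, r * ‖x‖ ≤ N x) {x : ℕ → E2} {i : ℕ} (unit : N (x i) = 1) {τ : ℝ}
    (mesh : N (x (i + 1) - x i) ≤ τ) : edgeDet x i ≤ τ / r ^ 2 := by
  have norm_le : ∀ {y t}, N y ≤ t → ‖y‖ ≤ t / r := fun {y t} h =>
    (le_div_iff₀' hr).2 ((lower y).trans h)
  calc edgeDet x i = wedge (x i) (x (i + 1) - x i) := by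
        rw [map_sub, wedge_self, sub_zero, edgeDet]
    _ ≤ ‖x i‖ * ‖x (i + 1) - x i‖ := (le_abs_self _).trans (abs_wedge_le _ _)
    _ ≤ 1 / r * (τ / r) := by
        gcongr
        exacts [norm_le unit.le, norm_le mesh]
    _ = τ / r ^ 2 := by rw [div_mul_div_comm, one_mul, sq]

lemma exists_inscribed_polygon_edgeDet_le {N : Seminorm ℝ E2} (hN : Continuous N) {r : ℝ}
    (hr : 0 < r) (lower : ∀ x, r * ‖x‖ ≤ N x) {η : ℝ} (hη : 0 < η) (hη' : η < 1) :
    ∃ n x, IsSymmPolygon n x ∧ (∀ i, N (x i) = 1) ∧ (∀ i, N (x (i + 1) - x i) ≤ η) ∧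
      ∀ i, edgeDet x i ≤ η * symmPolygonArea n x := by
  have volume_pos : 0 < volume {y | N y ≤ 1} :=
    ((isOpen_lt hN continuous_const).measure_pos _ ⟨0, (map_zero N).trans_lt one_pos⟩).trans_le
      (measure_mono fun y => le_of_lt (a := N y))
  obtain ⟨s, hs, s_lt⟩ := ENNReal.lt_iff_exists_nnreal_btwn.1 volume_pos
  have s_pos : (0 : ℝ) < s := by exact_mod_cast hs
  have one_sub_pos : 0 < 1 - η := sub_pos.2 hη'
  obtain ⟨n, x, hx, unit, mesh⟩ := exists_fine_inscribed_polygon hN hr lower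
    (τ := min η (η * ((1 - η) ^ 2 * s) * r ^ 2)) (by positivity)
  have area_large : (1 - η) ^ 2 * s ≤ symmPolygonArea n x := by
    have := s_lt.le.trans
      (volume_seminorm_ball_le hx unit hη' fun i => (mesh i).trans (min_le_left _ _))
    rw [ENNReal.coe_nnreal_eq, ENNReal.ofReal_le_ofReal_iff
      (mul_nonneg (sq_nonneg _) hx.symmPolygonArea_pos.le), inv_pow, inv_mul_eq_div] at this
    exact (le_div_iff₀' (pow_pos one_sub_pos 2)).1 this
  refine ⟨n, x, hx, unit, fun i => (mesh i).trans (min_le_left _ _), fun i => ?_⟩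
  calc edgeDet x i ≤ η * ((1 - η) ^ 2 * s) * r ^ 2 / r ^ 2 :=
        edgeDet_le_of_seminorm_sub_le hr lower (unit i) ((mesh i).trans (min_le_right _ _))
    _ = η * ((1 - η) ^ 2 * s) := mul_div_cancel_right₀ _ (by positivity)
    _ ≤ η * symmPolygonArea n x := by gcongr

/-! ### Stability -/

lemma pi_sq_sub_pi_mul_sq_le {δ : ℝ} (hδ : δ ^ 2 ≤ π ^ 2) :
    π ^ 2 - π * δ ^ 2 ≤ (π ^ 2 - δ ^ 2) * (1 - δ ^ 2 / 10) ^ 2 := by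
  have slope : 1 + π ^ 2 / 5 ≤ π := by nlinarith [pi_gt_d2, pi_lt_d2]
  calc π ^ 2 - π * δ ^ 2 ≤ π ^ 2 - (1 + π ^ 2 / 5) * δ ^ 2 := by gcongr
    _ ≤ (π ^ 2 - δ ^ 2) * (1 - 2 * (δ ^ 2 / 10)) := by linarith [sq_nonneg (δ ^ 2)]
    _ ≤ (π ^ 2 - δ ^ 2) * (1 - δ ^ 2 / 10) ^ 2 := by
        gcongr
        linarith [sub_sq 1 (δ ^ 2 / 10), sq_nonneg (δ ^ 2 / 10)]

theorem volume_product_le_or_withinEllipses {N : Seminorm ℝ E2} (hN : Continuous N) {r : ℝ}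
    (hr : 0 < r) (lower : ∀ x, r * ‖x‖ ≤ N x) {δ : ℝ} (hδ : 0 < δ) (hδ' : δ ≤ 1 / 100) :
    volume {x | N x ≤ 1} * volume (polarBody {x | N x ≤ 1}) ≤ ENNReal.ofReal (π ^ 2 - δ ^ 2) ∨
      WithinEllipses {x | N x ≤ 1} (1 + 4 * (12 * δ)) := by
  have hδ_sq : δ ^ 2 ≤ 1 / 10000 := by nlinarith
  have hη : δ ^ 2 / 10 < 1 := by linarith
  obtain ⟨n, x, hx, unit, mesh, edges⟩ :=
    exists_inscribed_polygon_edgeDet_le hN hr lower (η := δ ^ 2 / 10) (by positivity) hη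
  set S := symmPolygonArea n x
  set Q := symmPolygonArea n (dualVertex x)
  have S_pos : 0 < S := hx.symmPolygonArea_pos
  rcases lt_or_ge (S * Q) (π ^ 2 - π * δ ^ 2) with small | large
  · left
    calc _ ≤ ENNReal.ofReal ((1 - δ ^ 2 / 10)⁻¹ ^ 2 * S) * ENNReal.ofReal Q :=
          mul_le_mul' (volume_seminorm_ball_le hx unit hη mesh) (hx.volume_polarBody_le unit)
      _ = ENNReal.ofReal ((1 - δ ^ 2 / 10)⁻¹ ^ 2 * (S * Q)) := by
          rw [← ENNReal.ofReal_mul (by positivity), mul_assoc]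
      _ ≤ ENNReal.ofReal (π ^ 2 - δ ^ 2) := by
          refine ENNReal.ofReal_le_ofReal ?_
          rw [inv_pow, inv_mul_eq_div, div_le_iff₀ (pow_pos (sub_pos.2 hη) 2)]
          exact small.le.trans (pi_sq_sub_pi_mul_sq_le (by nlinarith [pi_gt_three]))
  · right
    have relative_mesh : ∀ i, π / S * edgeDet x i ≤ δ ^ 2 := fun i =>
      calc π / S * edgeDet x i ≤ π / S * (δ ^ 2 / 10 * S) := by gcongr; exact edges i
        _ = π / 10 * δ ^ 2 := by field_simp
        _ ≤ δ ^ 2 := by nlinarith [pi_lt_four]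
    obtain ⟨A, near⟩ := hx.exists_linear_near_unit_circle hδ hδ' relative_mesh large
    exact withinEllipses_of_near_sphere hN (by positivity) (by linarith) fun u hu =>
      let ⟨j, hj⟩ := near u hu
      ⟨x j, unit j, hj⟩

lemma WithinEllipses.mono {K : Set E2} {ρ σ : ℝ} (h : WithinEllipses K ρ) (hρσ : ρ ≤ σ) :
    WithinEllipses K σ :=
  let ⟨T, lam, bijective, one_le, lt, inner, outer⟩ := h
  ⟨T, lam, bijective, one_le, lt.trans_le hρσ, inner, outer⟩

theorem blaschke_santalo_stability_symmetric_general {ε : ℝ} (hε : ε ∈ Set.Ioc 0 1) {K : Set E2}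
    (hK : IsCompact K) (convex : Convex ℝ K) (h0 : 0 ∈ interior K) (symm : K = -K)
    (far : ¬ WithinEllipses K (1 + ε)) :
    volume K * volume (polarBody K) ≤ ENNReal.ofReal (π ^ 2 - (ε / 100) ^ 2) := by
  obtain ⟨N, r, hN, rfl, hr, lower⟩ := exists_seminorm_unit_ball_eq hK.isClosed hK.isBounded convex
    (mem_interior_iff_mem_nhds.1 h0) symm
  refine (volume_product_le_or_withinEllipses hN hr lower (div_pos hε.1 (by norm_num))
    (div_le_div_of_nonneg_right hε.2 (by norm_num))).resolve_right fun near => far (near.mono ?_)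
  linarith [hε.1]

lemma pi_sq_sub_sq_le {c ε : ℝ} (hc : c < 8) (hε : 0 ≤ ε) (hε' : ε ≤ 1 / 10000000) :
    π ^ 2 - (ε / 100) ^ 2 ≤ π ^ 2 * (1 - c * ε ^ 3) := by
  have cubic_le : c * ε ^ 3 * π ^ 2 ≤ (ε / 100) ^ 2 :=
    calc c * ε ^ 3 * π ^ 2 ≤ 8 * ε ^ 3 * 4 ^ 2 := by gcongr; exact pi_le_four
      _ = 128 * ε * ε ^ 2 := by ring
      _ ≤ 1 / 10000 * ε ^ 2 := by gcongr; linarith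
      _ = (ε / 100) ^ 2 := by ring
  linarith

/-- Stability of the planar Blaschke–Santaló inequality in the o-symmetric case:
for any c < 8, for sufficiently small ε, if the Banach–Mazur distance of K from the
ellipses is at least 1 + ε, then V(K)·V(K*) ≤ π²(1 − c·ε³). -/
theorem blaschke_santalo_stability_symmetric (c : ℝ) (hc : c < 8) :
    ∃ ε₀ : ℝ, 0 < ε₀ ∧
      ∀ ε ∈ Set.Ioo 0 ε₀,
      ∀ K : Set E2, IsCompact K → Convex ℝ K → (interior K).Nonempty →
      (0 : E2) ∈ interior K → K = -K →
      (¬ ∃ (T : E2 →ₗ[ℝ] E2) (lam : ℝ), Function.Bijective T ∧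
          1 ≤ lam ∧ lam < 1 + ε ∧
          ⇑T '' Metric.closedBall (0 : E2) 1 ⊆ K ∧
          K ⊆ (fun x => lam • T x) '' Metric.closedBall (0 : E2) 1) →
      volume K * volume (polarBody K) ≤
        ENNReal.ofReal (π ^ 2 * (1 - c * ε ^ 3)) := by
  exact ⟨1 / 10000000, by norm_num, fun ε hε K hK convex _ h0 symm far =>
    (blaschke_santalo_stability_symmetric_general ⟨hε.1, by linarith [hε.2]⟩ hK convex h0 symm
      far).trans (ENNReal.ofReal_le_ofReal (pi_sq_sub_sq_le hc hε.1.le hε.2.le))⟩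
end
end

section
/- Let d ≥ 2 and let M ⊂ ℝ^d be a convex body. The function f(z) = V((M − z)*), defined for z in the interior of M, is strictly convex, tends to +∞ as z approaches the boundary of M, and attains its minimum at a unique point s(M) in the interior of M. -/
/-!
Let `h` be the support function of `M`. The polar `(M - z)*` is the sublevel set
`{y | h y - ⟪z, y⟫ ≤ 1}` of a positively homogeneous function, so integrating over the level sets
gives `∫ exp (⟪z, y⟫ - h y) dy = d! * V((M - z)*)` for `z` in the closure of `M`.

The integrand is convex in `z`, strictly so on a set of `y` of positive measure, hence the integral
is strictly convex. By Fatou's lemma it is lower semicontinuous on the closure of `M`. At a frontier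
point `p` with outer normal `u`, the polar of `M - p` contains balls of a fixed radius around all
points `t • u` with `0 ≤ t`, so the integral is infinite there. Hence its sublevel sets in the
closure of `M` are compact and do not meet the frontier, which yields the blow-up, and its minimum
over the closure is attained in the interior.
-/

open MeasureTheory Real
open scoped Pointwise RealInnerProductSpace ENNReal

noncomputable section

/-- The polar body of the translate K − z:
`(K − z)* = {y : ⟪x − z, y⟫ ≤ 1 for all x ∈ K}`. -/
def translatePolar {d : ℕ} (K : Set (EuclideanSpace ℝ (Fin d)))
    (z : EuclideanSpace ℝ (Fin d)) : Set (EuclideanSpace ℝ (Fin d)) :=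
  {y | ∀ x ∈ K, ⟪x - z, y⟫ ≤ 1}

/-- s is the Santaló point of K: it lies in the interior of K and minimizes
the volume of the polar of the corresponding translate. -/
def IsSantaloPoint {d : ℕ} (K : Set (EuclideanSpace ℝ (Fin d)))
    (s : EuclideanSpace ℝ (Fin d)) : Prop :=
  s ∈ interior K ∧
    ∀ z ∈ interior K, volume (translatePolar K s) ≤ volume (translatePolar K z)

/-- κ_d, the volume of the d-dimensional Euclidean unit ball, as a real number. -/
def kappa (d : ℕ) : ℝ :=
  (volume (Metric.closedBall (0 : EuclideanSpace ℝ (Fin d)) 1)).toReal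

section Integration

variable {α E : Type*} [MeasurableSpace α] {ν : Measure α}

lemma lintegral_Ici_exp_neg (c : ℝ) :
    ∫⁻ t in Set.Ici c, ENNReal.ofReal (exp (-t)) = ENNReal.ofReal (exp (-c)) := by
  rw [← setLIntegral_congr Ioi_ae_eq_Ici, ← integral_exp_neg_Ioi,
    ofReal_integral_eq_lintegral_ofReal (integrableOn_exp_neg_Ioi c)
      (.of_forall fun _ ↦ (exp_pos _).le)]

lemma lintegral_exp_neg_eq_lintegral_measure_sublevel [SFinite ν] {g : α → ℝ}
    (hg : Measurable g) :
    ∫⁻ y, ENNReal.ofReal (exp (-g y)) ∂ν =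
      ∫⁻ t, ENNReal.ofReal (exp (-t)) * ν {y | g y ≤ t} := by
  let F : α × ℝ → ℝ≥0∞ :=
    {p : α × ℝ | g p.1 ≤ p.2}.indicator fun p ↦ ENNReal.ofReal (exp (-p.2))
  have hF : Measurable F := Measurable.indicator (by fun_prop)
    (measurableSet_le (hg.comp measurable_fst) measurable_snd)
  calc ∫⁻ y, ENNReal.ofReal (exp (-g y)) ∂ν
    _ = ∫⁻ y, (∫⁻ t, F (y, t)) ∂ν := by
        refine lintegral_congr fun y ↦ ?_
        rw [← lintegral_Ici_exp_neg, ← lintegral_indicator measurableSet_Ici]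
        rfl
    _ = ∫⁻ t, ∫⁻ y, F (y, t) ∂ν := lintegral_lintegral_swap hF.aemeasurable
    _ = ∫⁻ t, ENNReal.ofReal (exp (-t)) * ν {y | g y ≤ t} :=
        lintegral_congr fun t ↦ lintegral_indicator_const (s := {y | g y ≤ t})
          (hg measurableSet_Iic) (ENNReal.ofReal (exp (-t)))

lemma lintegral_Ioi_exp_neg_mul_pow (n : ℕ) :
    ∫⁻ t in Set.Ioi (0 : ℝ), ENNReal.ofReal (exp (-t) * t ^ n) = n.factorial := by
  have hpow : ∀ t : ℝ, t ^ n = t ^ ((n + 1 : ℝ) - 1) := fun t ↦ by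
    rw [add_sub_cancel_right, rpow_natCast]
  simp_rw [hpow]
  rw [← ofReal_integral_eq_lintegral_ofReal (GammaIntegral_convergent (by positivity)),
    ← Gamma_eq_integral (by positivity), Gamma_nat_eq_factorial, ENNReal.ofReal_natCast]
  filter_upwards [ae_restrict_mem measurableSet_Ioi] with t (ht : 0 < t)
  positivity

lemma lowerSemicontinuous_lintegral [TopologicalSpace E] [FirstCountableTopology E]
    {f : E → α → ℝ≥0∞} (hmeas : ∀ z, Measurable (f z))
    (hf : ∀ y, LowerSemicontinuous fun z ↦ f z y) :
    LowerSemicontinuous fun z ↦ ∫⁻ y, f z y ∂ν := by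
  refine lowerSemicontinuous_iff_le_liminf.2 fun z ↦ ?_
  exact (lintegral_mono fun y ↦ (hf y).le_liminf z).trans (lintegral_liminf_le hmeas)

lemma strictConvexOn_integral [AddCommGroup E] [Module ℝ E] {s : Set E} {f : E → α → ℝ}
    (hs : Convex ℝ s) (hf : ∀ y, ConvexOn ℝ s fun z ↦ f z y)
    (hint : ∀ z ∈ s, Integrable (f z) ν)
    (hstrict : ∀ z₁ ∈ s, ∀ z₂ ∈ s, z₁ ≠ z₂ → ∀ a b : ℝ, 0 < a → 0 < b → a + b = 1 →
      0 < ν {y | f (a • z₁ + b • z₂) y < a * f z₁ y + b * f z₂ y}) :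
    StrictConvexOn ℝ s fun z ↦ ∫ y, f z y ∂ν := by
  refine ⟨hs, fun z₁ h₁ z₂ h₂ hne a b ha hb hab ↦ ?_⟩
  have hmid := hint _ (hs h₁ h₂ ha.le hb.le hab)
  have hcomb : Integrable (fun y ↦ a * f z₁ y + b * f z₂ y) ν :=
    ((hint z₁ h₁).const_mul a).add ((hint z₂ h₂).const_mul b)
  have hgap : 0 < ∫ y, (a * f z₁ y + b * f z₂ y - f (a • z₁ + b • z₂) y) ∂ν := by
    have hnonneg : 0 ≤ fun y ↦ a * f z₁ y + b * f z₂ y - f (a • z₁ + b • z₂) y :=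
      fun y ↦ sub_nonneg.2 ((hf y).2 h₁ h₂ ha.le hb.le hab)
    rw [integral_pos_iff_support_of_nonneg hnonneg (hcomb.sub hmid)]
    exact (hstrict z₁ h₁ z₂ h₂ hne a b ha hb hab).trans_le
      (measure_mono fun y hy ↦ (sub_pos.2 hy).ne')
  rw [integral_sub hcomb hmid, integral_add ((hint z₁ h₁).const_mul a) ((hint z₂ h₂).const_mul b),
    integral_const_mul, integral_const_mul] at hgap
  exact sub_pos.1 hgap

end Integration

lemma strictConvexOn_const_mul {E : Type*} [AddCommGroup E] [Module ℝ E] {s : Set E} {f : E → ℝ}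
    (hf : StrictConvexOn ℝ s f) {c : ℝ} (hc : 0 < c) : StrictConvexOn ℝ s fun z ↦ c * f z := by
  refine ⟨hf.1, fun z₁ h₁ z₂ h₂ hne a b ha hb hab ↦ ?_⟩
  calc c * f (a • z₁ + b • z₂) < c * (a • f z₁ + b • f z₂) :=
        mul_lt_mul_of_pos_left (hf.2 h₁ h₂ hne ha hb hab) hc
    _ = a • (c * f z₁) + b • (c * f z₂) := by simp only [smul_eq_mul]; ring

lemma exists_pos_forall_infDist_lt_imp_lt {X β : Type*} [PseudoMetricSpace X] [LinearOrder β]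
    {F : X → β} {K T : Set X} (hF : LowerSemicontinuousOn F K) (hK : IsCompact K)
    (hT : IsClosed T) (hTne : T.Nonempty) {c : β} (hc : ∀ z ∈ T, c < F z) :
    ∃ δ > 0, ∀ z ∈ K, Metric.infDist z T < δ → c < F z := by
  have hdisj : Disjoint (K ∩ F ⁻¹' Set.Iic c) T :=
    Set.disjoint_left.2 fun z hz hzT ↦ (hc z hzT).not_ge hz.2
  obtain ⟨δ, hδ, hthick⟩ := hdisj.exists_thickenings (hF.isCompact_inter_preimage_Iic hK c) hT
  refine ⟨δ, hδ, fun z hzK hzT ↦ lt_of_not_ge fun hzc ↦ ?_⟩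
  exact Set.disjoint_left.1 hthick (Metric.self_subset_thickening hδ _ ⟨hzK, hzc⟩)
    ((Metric.mem_thickening_iff_infDist_lt hTne).2 hzT)

section Haar

variable {E : Type*} [NormedAddCommGroup E] [NormedSpace ℝ E] [MeasurableSpace E] [BorelSpace E]
  (μ : Measure E) [μ.IsAddHaarMeasure]

lemma measure_eq_top_of_forall_ball_smul_subset {u : E} (hu : u ≠ 0) {r : ℝ} (hr : 0 < r)
    {s : Set E} (hs : ∀ t ≥ (0 : ℝ), Metric.ball (t • u) r ⊆ s) : μ s = ∞ := by
  have hu0 : 0 < ‖u‖ := norm_pos_iff.2 hu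
  set c : ℕ → E := fun k ↦ (2 * r / ‖u‖ * k) • u
  have hdisj : Pairwise (Function.onFun Disjoint fun k ↦ Metric.ball (c k) r) := by
    intro j k hjk
    refine Metric.ball_disjoint_ball ?_
    have hsep : (1 : ℝ) ≤ |(j : ℝ) - k| := by
      exact_mod_cast Int.one_le_abs (sub_ne_zero.2 (Nat.cast_injective.ne hjk))
    calc r + r = 2 * r * 1 := by ring
      _ ≤ 2 * r * |(j : ℝ) - k| := by gcongr
      _ = dist (c j) (c k) := by
        rw [dist_eq_norm, ← sub_smul, ← mul_sub, norm_smul, norm_eq_abs, abs_mul,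
          abs_of_pos (div_pos (mul_pos two_pos hr) hu0)]
        field_simp [hu0.ne']
  have hsub : ⋃ k, Metric.ball (c k) r ⊆ s := Set.iUnion_subset fun k ↦ hs _ (by positivity)
  refine measure_mono_top hsub ?_
  rw [measure_iUnion hdisj fun _ ↦ measurableSet_ball]
  simp only [Measure.addHaar_ball_center]
  exact ENNReal.tsum_const_eq_top_of_ne_zero (Metric.measure_ball_pos μ 0 hr).ne'

lemma lintegral_exp_neg_of_homogeneous [FiniteDimensional ℝ E] {g : E → ℝ}
    (hg : Measurable g) (hg0 : ∀ y, 0 ≤ g y) (hhom : ∀ t > 0, ∀ y, g (t • y) = t * g y) :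
    ∫⁻ y, ENNReal.ofReal (exp (-g y)) ∂μ = (Module.finrank ℝ E).factorial * μ {y | g y ≤ 1} := by
  have hneg : ∀ t ∉ Set.Ici (0 : ℝ), {y | g y ≤ t} = ∅ := fun t ht ↦
    Set.eq_empty_of_forall_notMem fun y hy ↦ ht ((hg0 y).trans hy)
  have hscale : ∀ t > 0, {y | g y ≤ t} = t • {y | g y ≤ 1} := fun t ht ↦ by
    ext y
    simp only [Set.mem_smul_set_iff_inv_smul_mem₀ ht.ne', Set.mem_ofPred_eq,
      hhom t⁻¹ (inv_pos.2 ht), inv_mul_le_iff₀ ht, mul_one]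
  calc ∫⁻ y, ENNReal.ofReal (exp (-g y)) ∂μ
    _ = ∫⁻ t, ENNReal.ofReal (exp (-t)) * μ {y | g y ≤ t} :=
        lintegral_exp_neg_eq_lintegral_measure_sublevel hg
    _ = ∫⁻ t in Set.Ioi 0, ENNReal.ofReal (exp (-t)) * μ {y | g y ≤ t} := by
        rw [setLIntegral_congr Ioi_ae_eq_Ici, setLIntegral_eq_of_support_subset]
        exact fun t ht ↦ by_contra fun ht0 ↦ ht (by simp only [hneg t ht0, measure_empty, mul_zero])
    _ = ∫⁻ t in Set.Ioi 0,
          ENNReal.ofReal (exp (-t) * t ^ Module.finrank ℝ E) * μ {y | g y ≤ 1} := by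
        refine setLIntegral_congr_fun measurableSet_Ioi fun t (ht : 0 < t) ↦ ?_
        simp only [hscale t ht, Measure.addHaar_smul, abs_of_pos (pow_pos ht _),
          ENNReal.ofReal_mul (exp_pos _).le, mul_assoc]
    _ = (Module.finrank ℝ E).factorial * μ {y | g y ≤ 1} := by
        rw [lintegral_mul_const _ (by fun_prop), lintegral_Ioi_exp_neg_mul_pow]

end Haar

section Polar

variable {E : Type*} [NormedAddCommGroup E] [InnerProductSpace ℝ E] {M : Set E}

/-- The polar `(M - z)*` of the translate `M - z` in a real inner product space; for `E = ℝ^d` this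
unfolds to `translatePolar M z`. -/
def polarAt (M : Set E) (z : E) : Set E :=
  {y | ∀ x ∈ M, ⟪x - z, y⟫ ≤ 1}

/-- The support function `y ↦ sup_{x ∈ M} ⟪x, y⟫` of a set `M`, whose sublevel sets shifted by a
linear function are the polars of translates of `M`. It has the junk value `0` at `y` if `M` is
empty or unbounded in the direction `y`. -/
def supportFunction (M : Set E) (y : E) : ℝ :=
  sSup ((fun x ↦ ⟪x, y⟫) '' M)

lemma supportFunction_le_iff (hM : Bornology.IsBounded M) (hne : M.Nonempty) {y : E} {t : ℝ} :
    supportFunction M y ≤ t ↔ ∀ x ∈ M, ⟪x, y⟫ ≤ t := by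
  have hbdd : BddAbove ((fun x ↦ ⟪x, y⟫) '' M) := by
    obtain ⟨R, hR⟩ := hM.exists_norm_le
    refine ⟨R * ‖y‖, Set.forall_mem_image.2 fun x hx ↦ (real_inner_le_norm x y).trans ?_⟩
    gcongr
    exact hR x hx
  rw [supportFunction, csSup_le_iff hbdd (hne.image _), Set.forall_mem_image]

lemma inner_le_supportFunction (hM : Bornology.IsBounded M) {z : E} (hz : z ∈ closure M) (y : E) :
    ⟪z, y⟫ ≤ supportFunction M y :=
  closure_minimal (t := {x | ⟪x, y⟫ ≤ supportFunction M y})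
    ((supportFunction_le_iff hM (closure_nonempty_iff.1 ⟨z, hz⟩)).1 le_rfl)
    (isClosed_le (by fun_prop) continuous_const) hz

lemma supportFunction_smul (M : Set E) {t : ℝ} (ht : 0 ≤ t) (y : E) :
    supportFunction M (t • y) = t * supportFunction M y := by
  rw [supportFunction, supportFunction, ← smul_eq_mul, ← Real.sSup_smul_of_nonneg ht,
    ← Set.image_smul, Set.image_image]
  simp only [inner_smul_right, smul_eq_mul]

lemma measurable_supportFunction [MeasurableSpace E] [BorelSpace E] (hM : Bornology.IsBounded M)
    (hne : M.Nonempty) : Measurable (supportFunction M) := by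
  refine measurable_of_Iic fun t ↦ IsClosed.measurableSet ?_
  have hsub : supportFunction M ⁻¹' Set.Iic t = ⋂ x ∈ M, {y | ⟪x, y⟫ ≤ t} := by
    ext y
    simp only [Set.mem_preimage, Set.mem_Iic, supportFunction_le_iff hM hne, Set.mem_iInter,
      Set.mem_ofPred_eq]
  rw [hsub]
  exact isClosed_biInter fun x _ ↦ isClosed_le (by fun_prop) continuous_const

lemma setOf_supportFunction_sub_inner_le_one (hM : Bornology.IsBounded M) (hne : M.Nonempty)
    (z : E) : {y | supportFunction M y - ⟪z, y⟫ ≤ 1} = polarAt M z := by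
  ext y
  simp only [polarAt, Set.mem_ofPred_eq, sub_le_iff_le_add, supportFunction_le_iff hM hne,
    inner_sub_left]

lemma polarAt_subset_closedBall {z : E} {r : ℝ} (hr : 0 < r) (hz : Metric.closedBall z r ⊆ M) :
    polarAt M z ⊆ Metric.closedBall 0 r⁻¹ := by
  intro y hy
  rw [mem_closedBall_zero_iff]
  rcases eq_or_ne y 0 with rfl | hy0
  · simpa only [norm_zero] using (inv_pos.2 hr).le
  have hn : 0 < ‖y‖ := norm_pos_iff.2 hy0
  have hmem : z + (r / ‖y‖) • y ∈ M := hz <| by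
    rw [mem_closedBall_iff_norm, add_sub_cancel_left, norm_smul, norm_div, norm_norm,
      div_mul_cancel₀ _ hn.ne', norm_of_nonneg hr.le]
  have hle : r * ‖y‖ ≤ 1 := by
    calc r * ‖y‖ = ⟪z + (r / ‖y‖) • y - z, y⟫ := by
          rw [add_sub_cancel_left, real_inner_smul_left, real_inner_self_eq_norm_sq]
          field_simp
      _ ≤ 1 := hy _ hmem
  exact (le_inv_mul_iff₀ hr).2 hle |>.trans_eq (mul_one _)

lemma ball_smul_subset_polarAt {p u : E} {r t : ℝ} (ht : 0 ≤ t) (hnorm : ∀ x ∈ M, ‖x - p‖ * r ≤ 1)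
    (hu : ∀ x ∈ M, ⟪x - p, u⟫ ≤ 0) : Metric.ball (t • u) r ⊆ polarAt M p := by
  intro y hy x hx
  calc ⟪x - p, y⟫ = ⟪x - p, y - t • u⟫ + t * ⟪x - p, u⟫ := by
        rw [inner_sub_right, real_inner_smul_right, sub_add_cancel]
    _ ≤ ‖x - p‖ * ‖y - t • u‖ + t * 0 := by
        gcongr
        exacts [real_inner_le_norm _ _, hu x hx]
    _ ≤ ‖x - p‖ * r := by
        rw [mul_zero, add_zero]
        gcongr
        exact (mem_ball_iff_norm.1 hy).le
    _ ≤ 1 := hnorm x hx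

lemma exists_outer_normal [CompleteSpace E] (hc : Convex ℝ M) (hi : (interior M).Nonempty) {p : E}
    (hp : p ∉ interior M) : ∃ u ≠ (0 : E), ∀ x ∈ M, ⟪x - p, u⟫ ≤ 0 := by
  obtain ⟨f, hf0, hf⟩ := geometric_hahn_banach_of_nonempty_interior_point hc hp hi
  refine ⟨(InnerProductSpace.toDual ℝ E).symm f, by simpa using hf0, fun x hx ↦ ?_⟩
  rw [real_inner_comm, InnerProductSpace.toDual_symm_apply, map_sub]
  exact sub_nonpos.2 (hf x hx)

lemma strictConvexOn_integral_exp_inner_sub [MeasurableSpace E] {ν : Measure E}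
    [ν.IsOpenPosMeasure] {s : Set E} {φ : E → ℝ} (hs : Convex ℝ s)
    (hint : ∀ z ∈ s, Integrable (fun y ↦ exp (⟪z, y⟫ - φ y)) ν) :
    StrictConvexOn ℝ s fun z ↦ ∫ y, exp (⟪z, y⟫ - φ y) ∂ν := by
  have haff : ∀ z₁ z₂ y : E, ∀ a b : ℝ, a + b = 1 → ⟪a • z₁ + b • z₂, y⟫ - φ y =
      a • (⟪z₁, y⟫ - φ y) + b • (⟪z₂, y⟫ - φ y) := by
    intro z₁ z₂ y a b hab
    rw [inner_add_left, real_inner_smul_left, real_inner_smul_left, smul_eq_mul, smul_eq_mul]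
    linear_combination φ y * hab
  refine strictConvexOn_integral hs (fun y ↦ ⟨hs, fun z₁ _ z₂ _ a b ha hb hab ↦ ?_⟩) hint
    fun z₁ _ z₂ _ hne a b ha hb hab ↦ ?_
  · simp only [haff _ _ _ _ _ hab]
    exact convexOn_exp.2 trivial trivial ha hb hab
  · have hopen : IsOpen {y : E | ⟪z₁, y⟫ ≠ ⟪z₂, y⟫} := isOpen_ne_fun (by fun_prop) (by fun_prop)
    have hmem : ⟪z₁, z₁ - z₂⟫ ≠ ⟪z₂, z₁ - z₂⟫ := by
      rwa [← sub_ne_zero, ← inner_sub_left, inner_self_ne_zero, sub_ne_zero]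
    refine (hopen.measure_pos ν ⟨z₁ - z₂, hmem⟩).trans_le (measure_mono fun y hy ↦ ?_)
    simp only [Set.mem_ofPred_eq, haff _ _ _ _ _ hab]
    exact strictConvexOn_exp.2 trivial trivial (sub_left_injective.ne hy) ha hb hab

variable [MeasurableSpace E] [FiniteDimensional ℝ E] (μ : Measure E)

lemma measure_polarAt_ne_top [IsFiniteMeasureOnCompacts μ] {z : E} (hz : z ∈ interior M) :
    μ (polarAt M z) ≠ ∞ := by
  obtain ⟨r, hr, hball⟩ := Metric.nhds_basis_closedBall.mem_iff.1 (mem_interior_iff_mem_nhds.1 hz)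
  exact measure_ne_top_of_subset (polarAt_subset_closedBall hr hball) measure_closedBall_lt_top.ne

variable [BorelSpace E] [μ.IsAddHaarMeasure]

lemma measure_polarAt_eq_top (hM : Bornology.IsBounded M) (hc : Convex ℝ M)
    (hi : (interior M).Nonempty) {p : E} (hp : p ∉ interior M) : μ (polarAt M p) = ∞ := by
  obtain ⟨u, hu0, hu⟩ := exists_outer_normal hc hi hp
  obtain ⟨R, hR, hMR⟩ := (hM.vadd (-p)).exists_pos_norm_le
  refine measure_eq_top_of_forall_ball_smul_subset μ hu0 (inv_pos.2 hR) fun t ht ↦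
    ball_smul_subset_polarAt ht (fun x hx ↦ ?_) hu
  rw [← div_eq_mul_inv, div_le_one hR, sub_eq_neg_add]
  exact hMR _ (Set.vadd_mem_vadd_set hx)

lemma lintegral_exp_inner_sub_supportFunction (hM : Bornology.IsBounded M) {z : E}
    (hz : z ∈ closure M) :
    ∫⁻ y, ENNReal.ofReal (exp (⟪z, y⟫ - supportFunction M y)) ∂μ =
      (Module.finrank ℝ E).factorial * μ (polarAt M z) := by
  have hne : M.Nonempty := closure_nonempty_iff.1 ⟨z, hz⟩
  have hmeas := measurable_supportFunction hM hne
  rw [← setOf_supportFunction_sub_inner_le_one hM hne,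
    ← lintegral_exp_neg_of_homogeneous μ (by fun_prop)
      (fun y ↦ sub_nonneg.2 (inner_le_supportFunction hM hz y))
      fun t ht y ↦ by rw [supportFunction_smul M ht.le, inner_smul_right, mul_sub]]
  simp only [neg_sub]

lemma integrable_exp_inner_sub_supportFunction (hM : Bornology.IsBounded M) {z : E}
    (hz : z ∈ interior M) : Integrable (fun y ↦ exp (⟪z, y⟫ - supportFunction M y)) μ := by
  have hmeas := measurable_supportFunction hM ⟨z, interior_subset hz⟩
  rw [← lintegral_ofReal_ne_top_iff_integrable (Measurable.aestronglyMeasurable (by fun_prop))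
    (.of_forall fun _ ↦ (exp_pos _).le),
    lintegral_exp_inner_sub_supportFunction μ hM (interior_subset_closure hz)]
  exact ENNReal.mul_ne_top (ENNReal.natCast_ne_top _) (measure_polarAt_ne_top μ hz)

lemma measureReal_polarAt_eq_integral (hM : Bornology.IsBounded M) {z : E} (hz : z ∈ interior M) :
    μ.real (polarAt M z) = ((Module.finrank ℝ E).factorial : ℝ)⁻¹ *
      ∫ y, exp (⟪z, y⟫ - supportFunction M y) ∂μ := by
  rw [integral_eq_lintegral_of_nonneg_ae (.of_forall fun _ ↦ (exp_pos _).le)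
    (integrable_exp_inner_sub_supportFunction μ hM hz).1,
    lintegral_exp_inner_sub_supportFunction μ hM (interior_subset_closure hz),
    ENNReal.toReal_mul, ENNReal.toReal_natCast, inv_mul_cancel_left₀ (by positivity), Measure.real]

lemma strictConvexOn_measureReal_polarAt (hM : Bornology.IsBounded M) (hc : Convex ℝ M) :
    StrictConvexOn ℝ (interior M) fun z ↦ μ.real (polarAt M z) :=
  (strictConvexOn_const_mul
    (strictConvexOn_integral_exp_inner_sub hc.interior fun _ hz ↦
      integrable_exp_inner_sub_supportFunction μ hM hz) (by positivity)).congr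
    fun _ hz ↦ (measureReal_polarAt_eq_integral μ hM hz).symm

lemma lowerSemicontinuousOn_measure_polarAt (hM : Bornology.IsBounded M) :
    LowerSemicontinuousOn (fun z ↦ μ (polarAt M z)) (closure M) := by
  rcases M.eq_empty_or_nonempty with rfl | hne
  · simp [lowerSemicontinuousOn_iff]
  have hmeas := measurable_supportFunction hM hne
  have hlsc : LowerSemicontinuous fun z ↦
      ∫⁻ y, ENNReal.ofReal (exp (⟪z, y⟫ - supportFunction M y)) ∂μ :=
    lowerSemicontinuous_lintegral (fun z ↦ by fun_prop)
      fun y ↦ (ENNReal.continuous_ofReal.comp (by fun_prop)).lowerSemicontinuous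
  have hfac : ((Module.finrank ℝ E).factorial : ℝ≥0∞) ≠ 0 :=
    Nat.cast_ne_zero.2 (Nat.factorial_ne_zero _)
  have hscaled := (ENNReal.continuous_const_mul
    (ENNReal.inv_ne_top.2 hfac)).comp_lowerSemicontinuous hlsc mul_right_mono
  refine fun z hz ↦ LowerSemicontinuousWithinAt.congr_of_eventuallyEq
    (hscaled.lowerSemicontinuousOn _ z hz) hz ?_
  filter_upwards [self_mem_nhdsWithin] with w hw
  rw [Function.comp_apply, lintegral_exp_inner_sub_supportFunction μ hM hw,
    ENNReal.inv_mul_cancel_left hfac (ENNReal.natCast_ne_top _)]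

lemma exists_pos_forall_infDist_frontier_lt_imp_lt_measureReal_polarAt [Nontrivial E]
    (hM : Bornology.IsBounded M) (hc : Convex ℝ M) (hi : (interior M).Nonempty) (C : ℝ) :
    ∃ δ : ℝ, 0 < δ ∧ ∀ z ∈ interior M, Metric.infDist z (frontier M) < δ →
      C < μ.real (polarAt M z) := by
  have hfrontier : (frontier M).Nonempty :=
    nonempty_frontier_iff.2 ⟨hi.mono interior_subset, fun h ↦
      NormedSpace.unbounded_univ ℝ E (h ▸ hM)⟩
  obtain ⟨δ, hδ, hlt⟩ := exists_pos_forall_infDist_lt_imp_lt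
    (lowerSemicontinuousOn_measure_polarAt μ hM) hM.isCompact_closure isClosed_frontier hfrontier
    (c := ENNReal.ofReal C) fun p hp ↦
      (measure_polarAt_eq_top μ hM hc hi hp.2).symm ▸ ENNReal.ofReal_lt_top
  refine ⟨δ, hδ, fun z hz hzδ ↦ ?_⟩
  calc C ≤ (ENNReal.ofReal C).toReal := by
        rw [ENNReal.toReal_ofReal']
        exact le_max_left C 0
    _ < μ.real (polarAt M z) := ENNReal.toReal_strict_mono (measure_polarAt_ne_top μ hz)
        (hlt z (interior_subset_closure hz) hzδ)

lemma exists_forall_measureReal_polarAt_le (hM : Bornology.IsBounded M) (hc : Convex ℝ M)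
    (hi : (interior M).Nonempty) :
    ∃ s ∈ interior M, ∀ z ∈ interior M, μ.real (polarAt M s) ≤ μ.real (polarAt M z) := by
  obtain ⟨s, -, hmin⟩ := (lowerSemicontinuousOn_measure_polarAt μ hM).exists_isMinOn
    (hi.mono interior_subset_closure) hM.isCompact_closure
  have hs : s ∈ interior M := by
    obtain ⟨z, hz⟩ := hi
    by_contra hs
    exact measure_polarAt_ne_top μ hz
      (top_le_iff.1 (measure_polarAt_eq_top μ hM hc ⟨z, hz⟩ hs ▸ hmin (interior_subset_closure hz)))
  exact ⟨s, hs, fun z hz ↦ ENNReal.toReal_mono (measure_polarAt_ne_top μ hz)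
    (hmin (interior_subset_closure hz))⟩

theorem santalo_function_strictConvex_blowup_unique_min_general [Nontrivial E]
    (hM : Bornology.IsBounded M) (hc : Convex ℝ M) (hi : (interior M).Nonempty) :
    StrictConvexOn ℝ (interior M) (fun z ↦ μ.real (polarAt M z)) ∧
    (∀ C : ℝ, ∃ δ : ℝ, 0 < δ ∧ ∀ z ∈ interior M,
      Metric.infDist z (frontier M) < δ → C < μ.real (polarAt M z)) ∧
    (∃! s : E, s ∈ interior M ∧
      ∀ z ∈ interior M, μ.real (polarAt M s) ≤ μ.real (polarAt M z)) := by
  have hconv := strictConvexOn_measureReal_polarAt μ hM hc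
  obtain ⟨s, hs, hmin⟩ := exists_forall_measureReal_polarAt_le μ hM hc hi
  refine ⟨hconv,
    exists_pos_forall_infDist_frontier_lt_imp_lt_measureReal_polarAt μ hM hc hi, ?_⟩
  exact ⟨s, ⟨hs, hmin⟩, fun t ht ↦ hconv.eq_of_isMinOn ht.2 hmin ht.1 hs⟩

end Polar

/-- The function z ↦ V((M − z)*) is strictly convex on the interior of M, tends to +∞
towards the boundary, and attains its minimum at a unique point (the Santaló point). -/
theorem santalo_function_strictConvex_blowup_unique_min
    (d : ℕ) (hd : 2 ≤ d) (M : Set (EuclideanSpace ℝ (Fin d)))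
    (hMcomp : IsCompact M) (hMconv : Convex ℝ M) (hMint : (interior M).Nonempty) :
    StrictConvexOn ℝ (interior M)
      (fun z => (volume (translatePolar M z)).toReal) ∧
    (∀ C : ℝ, 0 < C → ∃ δ : ℝ, 0 < δ ∧ ∀ z ∈ interior M,
      Metric.infDist z (frontier M) < δ →
        C < (volume (translatePolar M z)).toReal) ∧
    (∃! s : EuclideanSpace ℝ (Fin d), s ∈ interior M ∧
      ∀ z ∈ interior M,
        (volume (translatePolar M s)).toReal ≤ (volume (translatePolar M z)).toReal) := by
  have : Nontrivial (EuclideanSpace ℝ (Fin d)) :=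
    Module.nontrivial_of_finrank_pos (R := ℝ) (by rw [finrank_euclideanSpace_fin]; lia)
  obtain ⟨hconv, hblowup, hmin⟩ := santalo_function_strictConvex_blowup_unique_min_general
    volume hMcomp.isBounded hMconv hMint
  exact ⟨hconv, fun C _ ↦ hblowup C, hmin⟩
end
end
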